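/- Let 1/2<γ<1 and let Φ, 𝒜_0,…,𝒜_3 be smooth radiation fields on ℝ×S² with ‖Φ‖_{3,∞,γ} + Σ_α‖𝒜_α‖_{3,∞,γ} < ∞; set 𝒥_α(q,ω)=L_α(ω)·Im(Φ·conj(∂_qΦ)) and 𝐪 := ∫_{−∞}^∞∫_{S²}𝒥₀ dS dq. Define for r>0 the asymptotic gauge potential A_{α,asy}(t,rω) := (1/4π)∫_{−∞}^{∞}∫_{S²} 𝒥_α(η,σ)/(t−r⟨ω,σ⟩) dS(σ)dη · χ_in(q) − (1/(2r))·ln(⟨t+r⟩/⟨t−r⟩)·(∫_{−∞}^{q}𝒥_α(η,ω)dη)·χ_in(q) + (1/(2r))·ln(⟨t+r⟩/⟨t−r⟩)·(∫_{q}^{∞}𝒥_α(η,ω)dη)·(1−χ_in(q)) + 𝒜_α(q,ω)/r + (𝐪/(4πr))·χ_ex(q)·δ_{α0}. Suppose the asymptotic Lorenz gauge condition holds, namely for every fixed (q,ω)∈ℝ×S², ∂^α A_{α,asy}(r−q, rω) = O(r^{−2}·ln r) as r→∞ (indices raised with the Minkowski metric diag(−1,1,1,1)). Then for all (q,ω):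 ∂_q( L^α(ω)𝒜_α(q,ω) + (𝐪/4π)χ_in(q) + (𝐪/4π)χ_ex(q) ) = 0. -/

import Mathlib

noncomputable section

open Real MeasureTheory Filter
open scoped RealInnerProductSpace Topology

/-- Spatial points: `ℝ³` with the Euclidean norm. -/
abbrev Pt : Type := EuclideanSpace ℝ (Fin 3)

/-- `r = |x|`. -/
def rad (x : Pt) : ℝ := ‖x‖

/-- Japanese bracket `⟨a⟩ = (1+a²)^{1/2}`. -/
def jb (a : ℝ) : ℝ := Real.sqrt (1 + a ^ 2)

/-- `∂_t`. -/
def dT (f : ℝ → Pt → ℂ) : ℝ → Pt → ℂ := fun t x => deriv (fun s => f s x) t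

/-- `∂_i`. -/
def dX (i : Fin 3) (f : ℝ → Pt → ℂ) : ℝ → Pt → ℂ :=
  fun t x => fderiv ℝ (fun y => f t y) x (EuclideanSpace.single i 1)

/-- `∂_r = Σ (x_i/r) ∂_i`. -/
def dR (f : ℝ → Pt → ℂ) : ℝ → Pt → ℂ :=
  fun t x => ((rad x : ℝ) : ℂ)⁻¹ * ∑ i, ((x i : ℝ) : ℂ) * dX i f t x

/-- `L = ∂_t + ∂_r`. -/
def dL (f : ℝ → Pt → ℂ) : ℝ → Pt → ℂ := fun t x => dT f t x + dR f t x

/-- `L̲ = ∂_t − ∂_r`. -/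
def dLbar (f : ℝ → Pt → ℂ) : ℝ → Pt → ℂ := fun t x => dT f t x - dR f t x

/-- angular derivative `∂̸_i = ∂_i − ω_i ∂_r`. -/
def dAng (i : Fin 3) (f : ℝ → Pt → ℂ) : ℝ → Pt → ℂ :=
  fun t x => dX i f t x - ((x i / rad x : ℝ) : ℂ) * dR f t x

/-- `|∂̸ f|²`. -/
def angSq (f : ℝ → Pt → ℂ) (t : ℝ) (x : Pt) : ℝ := ∑ i, ‖dAng i f t x‖ ^ 2

/-- multiplication by `r`. -/
def rmul (f : ℝ → Pt → ℂ) : ℝ → Pt → ℂ := fun t x => ((rad x : ℝ) : ℂ) * f t x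

/-- `□ = −∂_t² + Δ`. -/
def box (f : ℝ → Pt → ℂ) : ℝ → Pt → ℂ :=
  fun t x => - dT (dT f) t x + ∑ i, dX i (dX i f) t x

/-- rotation `Ω_{ij} = x_i ∂_j − x_j ∂_i`. -/
def vrot (i j : Fin 3) (f : ℝ → Pt → ℂ) : ℝ → Pt → ℂ :=
  fun t x => ((x i : ℝ) : ℂ) * dX j f t x - ((x j : ℝ) : ℂ) * dX i f t x

/-- boost `Ω_{0i} = t ∂_i + x_i ∂_t`. -/
def vboost (i : Fin 3) (f : ℝ → Pt → ℂ) : ℝ → Pt → ℂ :=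
  fun t x => (t : ℂ) * dX i f t x + ((x i : ℝ) : ℂ) * dT f t x

/-- scaling `S = t ∂_t + r ∂_r`. -/
def vscal (f : ℝ → Pt → ℂ) : ℝ → Pt → ℂ :=
  fun t x => (t : ℂ) * dT f t x + ((rad x : ℝ) : ℂ) * dR f t x

/-- The commutator vector fields `Z`. -/
inductive VF : Type
  | time : VF
  | space : Fin 3 → VF
  | rot : Fin 3 → Fin 3 → VF
  | boost : Fin 3 → VF
  | scal : VF
  deriving DecidableEq, Fintype

/-- Action of a commutator vector field on a function. -/
def VF.app : VF → (ℝ → Pt → ℂ) → (ℝ → Pt → ℂ)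
  | time => dT
  | space i => dX i
  | rot i j => vrot i j
  | boost i => vboost i
  | scal => vscal

/-- `Z^I` for a multiindex `I` (a list of vector fields). -/
def Ziter : List VF → (ℝ → Pt → ℂ) → ℝ → Pt → ℂ
  | [], f => f
  | z :: l, f => z.app (Ziter l f)

/-- `C^∞` smoothness for a function of `(t,x)`. -/
def Smooth2 (f : ℝ → Pt → ℂ) : Prop := ContDiff ℝ (⊤ : ℕ∞) (Function.uncurry f)

/-- real-valued versions of the derivative operators -/
def dTR (f : ℝ → Pt → ℝ) : ℝ → Pt → ℝ := fun t x => deriv (fun s => f s x) t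

def dXR (i : Fin 3) (f : ℝ → Pt → ℝ) : ℝ → Pt → ℝ :=
  fun t x => fderiv ℝ (fun y => f t y) x (EuclideanSpace.single i 1)

def boxR (f : ℝ → Pt → ℝ) : ℝ → Pt → ℝ :=
  fun t x => - dTR (dTR f) t x + ∑ i, dXR i (dXR i f) t x

/-- `∂_q` acting on radiation fields `F(q,ω)`. -/
def dq (F : ℝ → Pt → ℂ) : ℝ → Pt → ℂ := fun q ω => deriv (fun s => F s ω) q

/-- `∂_{ω_i}` acting on radiation fields. -/
def dOm (i : Fin 3) (F : ℝ → Pt → ℂ) : ℝ → Pt → ℂ :=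
  fun q ω => fderiv ℝ (fun y => F q y) ω (EuclideanSpace.single i 1)

/-- angular rotation `ω_i ∂_{ω_j} − ω_j ∂_{ω_i}` on radiation fields. -/
def aRot (i j : Fin 3) (F : ℝ → Pt → ℂ) : ℝ → Pt → ℂ :=
  fun q ω => ((ω i : ℝ) : ℂ) * dOm j F q ω - ((ω j : ℝ) : ℂ) * dOm i F q ω

/-- `⟨q⟩∂_q` on radiation fields. -/
def qdq (F : ℝ → Pt → ℂ) : ℝ → Pt → ℂ := fun q ω => ((jb q : ℝ) : ℂ) * dq F q ω

/-- `q∂_q` on radiation fields. -/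
def qmdq (F : ℝ → Pt → ℂ) : ℝ → Pt → ℂ := fun q ω => (q : ℂ) * dq F q ω

/-- iterated angular derivatives `∂_ω^α` (as iterated rotations). -/
def aIter : List (Fin 3 × Fin 3) → (ℝ → Pt → ℂ) → ℝ → Pt → ℂ
  | [], F => F
  | p :: l, F => aRot p.1 p.2 (aIter l F)

/-- `‖F‖_{N,∞,γ} ≤ ε`, stated term by term: every seminorm
`sup |(⟨q⟩∂_q)^k ∂_ω^α F| ⟨q⟩^γ` with `k+|α| ≤ N` is at most `ε`. -/
def RadBound (N : ℕ) (γ ε : ℝ) (F : ℝ → Pt → ℂ) : Prop :=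
  ∀ (k : ℕ) (l : List (Fin 3 × Fin 3)), k + l.length ≤ N →
    ∀ (q : ℝ) (ω : Pt), rad ω = 1 →
      ‖(qdq^[k]) (aIter l F) q ω‖ * jb q ^ γ ≤ ε

/-- spacetime indices `α ∈ {0,1,2,3}`: `none` is the time index. -/
abbrev Ix : Type := Option (Fin 3)

/-- `L^α(ω) = (1, ω)`. -/
def Lup : Ix → Pt → ℝ
  | none => fun _ => 1
  | some i => fun ω => ω i

/-- `L_α(ω) = (−1, ω)`. -/
def Llow : Ix → Pt → ℝ
  | none => fun _ => -1
  | some i => fun ω => ω i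

/-- `∂_α`. -/
def pd : Ix → (ℝ → Pt → ℂ) → ℝ → Pt → ℂ
  | none => dT
  | some i => dX i

/-- `∂_α` (real valued). -/
def pdR : Ix → (ℝ → Pt → ℝ) → ℝ → Pt → ℝ
  | none => dTR
  | some i => dXR i

/-- the surface measure on the unit sphere `S² ⊆ ℝ³`. -/
def sphM : Measure (Metric.sphere (0 : Pt) 1) := (volume : Measure Pt).toSphere

/-- weighted `L²` norm `(∫ |g(t,x)|² w(r−t) dx)^{1/2}`. -/
def sqL2 (w : ℝ → ℝ) (g : ℝ → Pt → ℂ) (t : ℝ) : ℝ :=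
  Real.sqrt (∫ x : Pt, ‖g t x‖ ^ 2 * w (rad x - t))


/-- `𝒥_α(q,σ) = L_α(σ)·Im(Φ(q,σ)·conj(∂_qΦ(q,σ)))` -/
def Jr (Φ : ℝ → Pt → ℂ) (α : Ix) (q : ℝ) (σ : Pt) : ℝ :=
  Llow α σ * (Φ q σ * (starRingEnd ℂ) (dq Φ q σ)).im

/-- the charge `𝐪 = ∫∫ 𝒥₀ dS dq` -/
def charge (Φ : ℝ → Pt → ℂ) : ℝ :=
  ∫ q : ℝ, ∫ σ : Metric.sphere (0 : Pt) 1, Jr Φ none q σ ∂sphM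

/-- the asymptotic gauge potential `A_{α,asy}` -/
def Aasy (χin χex : ℝ → ℝ) (Φ : ℝ → Pt → ℂ) (𝒜 : Ix → ℝ → Pt → ℝ) (α : Ix) :
    ℝ → Pt → ℝ := fun t x =>
  (1 / (4 * π)) * (∫ η : ℝ, ∫ σ : Metric.sphere (0 : Pt) 1,
      Jr Φ α η σ / (t - ⟪x, (σ : Pt)⟫) ∂sphM) * χin (rad x - t)
  - (1 / (2 * rad x)) * Real.log (jb (t + rad x) / jb (t - rad x))
      * (∫ η in Set.Iic (rad x - t), Jr Φ α η ((rad x)⁻¹ • x)) * χin (rad x - t)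
  + (1 / (2 * rad x)) * Real.log (jb (t + rad x) / jb (t - rad x))
      * (∫ η in Set.Ioi (rad x - t), Jr Φ α η ((rad x)⁻¹ • x)) * (1 - χin (rad x - t))
  + 𝒜 α (rad x - t) ((rad x)⁻¹ • x) / rad x
  + (charge Φ / (4 * π * rad x)) * χex (rad x - t) * (if α = none then 1 else 0)

/-- the Minkowski divergence `∂^α A_α = −∂_t A_0 + Σ_i ∂_i A_i` -/
def divA (A : Ix → ℝ → Pt → ℝ) : ℝ → Pt → ℝ := fun t x =>
  - dTR (A none) t x + ∑ i, dXR i (A (some i)) t x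

/-! Put `j = Im(Φ conj(∂_qΦ))`, so that `𝒥_α = L_α j`. In the null coordinates `q = r - t`,
`ω = x / r` the divergence of `A_asy` along the ray `(r - q, rω)` has a limit after multiplication
by `r`, and that limit must vanish by the gauge condition.

* The retarded integral is divergence free because `L^α L_α = 0`, so inside the light cone only
  the derivative of `χ_in` contributes; contracting with `L^α` gives the kernel
  `-r (1 - ⟨ω, σ⟩) / (r (1 - ⟨ω, σ⟩) - q)`, which tends to `-1` off `σ = ω` and leaves
  `𝐪 χ_in'(q) / 4π`. Outside the cone `χ_in` vanishes.
* In the logarithmic terms `L^α L_α = 0` kills every `q`-derivative, and what remains is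
  `O(r⁻² log r)`.
* A field `F_α(q, ω) / r` contributes `∂_q (L^α F_α)`, up to `O(1 / r)`. This applies to `𝒜_α` and
  to the Coulomb term. -/

section NullCoordinates

variable {E : Type*} [NormedAddCommGroup E] [InnerProductSpace ℝ E]

theorem hasFDerivAt_norm {x : E} (hx : x ≠ 0) :
    HasFDerivAt (fun y : E => ‖y‖) (innerSL ℝ (NormedSpace.normalize x)) x := by
  have hsqrt := (hasStrictFDerivAt_norm_sq x).hasFDerivAt.sqrt (by positivity)
  simp only [Real.sqrt_sq (norm_nonneg _)] at hsqrt
  refine hsqrt.congr_fderiv (ContinuousLinearMap.ext fun v => ?_)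
  simp only [smul_apply, innerSL_apply_apply, NormedSpace.normalize, real_inner_smul_left,
    smul_eq_mul, nsmul_eq_mul]
  push_cast
  ring

theorem hasFDerivAt_normalize {x : E} (hx : x ≠ 0) :
    HasFDerivAt NormedSpace.normalize
      (‖x‖⁻¹ • (ℝ ∙ NormedSpace.normalize x)ᗮ.starProjection) x := by
  have hx' : ‖x‖ ≠ 0 := norm_ne_zero_iff.mpr hx
  have hinv := (hasDerivAt_inv hx').comp_hasFDerivAt x (hasFDerivAt_norm hx)
  refine (hinv.smul (hasFDerivAt_id x)).congr_fderiv (ContinuousLinearMap.ext fun v => ?_)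
  simp only [Function.comp_apply, neg_smul, id_eq, add_apply, smul_apply, neg_apply, smul_eq_mul,
    ContinuousLinearMap.id_apply, ContinuousLinearMap.smulRight_apply, coe_innerSL_apply,
    ← sub_eq_add_neg, Submodule.starProjection_orthogonal', smul_sub, sub_apply, one_apply_eq_self,
    Submodule.starProjection_unit_singleton ℝ (NormedSpace.norm_normalize hx), sub_right_inj]
  rw [NormedSpace.normalize, smul_smul, smul_smul]
  congr 1
  field

/-- The null coordinates `(q, ω) = (|x| - t, x / |x|)` of the spacetime point `(t, x)`, in which
radiation fields are written. -/
def nullCoord (p : ℝ × E) : ℝ × E := (‖p.2‖ - p.1, NormedSpace.normalize p.2)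

theorem hasFDerivAt_nullCoord {p : ℝ × E} (hp : p.2 ≠ 0) :
    HasFDerivAt nullCoord
      ((innerSL ℝ (NormedSpace.normalize p.2) ∘L .snd ℝ ℝ E - .fst ℝ ℝ E).prod
        (‖p.2‖⁻¹ • (ℝ ∙ NormedSpace.normalize p.2)ᗮ.starProjection ∘L .snd ℝ ℝ E)) p :=
  (((hasFDerivAt_norm hp).comp p hasFDerivAt_snd).sub hasFDerivAt_fst).prodMk
    ((hasFDerivAt_normalize hp).comp p hasFDerivAt_snd)

variable {r q : ℝ} {ω : E}

theorem norm_smul_of_unit (hr : 0 < r) (hω : ‖ω‖ = 1) : ‖r • ω‖ = r := by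
  rw [norm_smul, hω, mul_one, norm_of_nonneg hr.le]

theorem normalize_smul_of_unit (hr : 0 < r) (hω : ‖ω‖ = 1) : NormedSpace.normalize (r • ω) = ω := by
  rw [NormedSpace.normalize_smul_of_pos hr, NormedSpace.normalize_eq_self_of_norm_eq_one hω]

theorem smul_unit_ne_zero (hr : 0 < r) (hω : ‖ω‖ = 1) : r • ω ≠ 0 :=
  smul_ne_zero hr.ne' (norm_ne_zero_iff.mp (hω ▸ one_ne_zero))

theorem nullCoord_ray (hr : 0 < r) (hω : ‖ω‖ = 1) : nullCoord (r - q, r • ω) = (q, ω) := by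
  simp [nullCoord, norm_smul_of_unit hr hω, normalize_smul_of_unit hr hω]

theorem hasFDerivAt_nullCoord_ray (hr : 0 < r) (hω : ‖ω‖ = 1) :
    HasFDerivAt nullCoord
      ((innerSL ℝ ω ∘L .snd ℝ ℝ E - .fst ℝ ℝ E).prod
        (r⁻¹ • (ℝ ∙ ω)ᗮ.starProjection ∘L .snd ℝ ℝ E)) (r - q, r • ω) := by
  simpa only [norm_smul_of_unit hr hω, normalize_smul_of_unit hr hω] using
    hasFDerivAt_nullCoord (p := (r - q, r • ω)) (smul_unit_ne_zero hr hω)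

end NullCoordinates

section CurriedDerivatives

variable {E F : Type*} [NormedAddCommGroup E] [NormedSpace ℝ E] [NormedAddCommGroup F]
  [NormedSpace ℝ F] {f : ℝ → E → F} {f' : ℝ × E →L[ℝ] F} {t : ℝ} {x : E}

theorem hasDerivAt_curry_left (hf : HasFDerivAt (Function.uncurry f) f' (t, x)) :
    HasDerivAt (fun s => f s x) (f' (1, 0)) t :=
  (hf.comp (f := fun s => (s, x)) t (hasFDerivAt_prodMk_left t x)).hasDerivAt

theorem hasFDerivAt_curry_right (hf : HasFDerivAt (Function.uncurry f) f' (t, x)) :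
    HasFDerivAt (f t) (f' ∘L .inr ℝ ℝ E) x :=
  hf.comp x (hasFDerivAt_prodMk_right t x)

end CurriedDerivatives

section Divergence

theorem sum_coord_sq_of_unit {ω : Pt} (hω : ‖ω‖ = 1) : ∑ i, ω i ^ 2 = 1 := by
  simpa [hω] using (EuclideanSpace.real_norm_sq_eq ω).symm

theorem sum_starProjection_orthogonal_apply {ω : Pt} (hω : ‖ω‖ = 1) :
    ∑ i, (ℝ ∙ ω)ᗮ.starProjection (EuclideanSpace.single i 1) i = 2 := by
  simp only [Submodule.starProjection_orthogonal', sub_apply, one_apply_eq_self,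
    Submodule.starProjection_unit_singleton ℝ hω, EuclideanSpace.inner_single_right, PiLp.sub_apply,
    PiLp.single_apply, PiLp.smul_apply, smul_eq_mul, if_true, one_mul, conj_trivial,
    ← sq, Finset.sum_sub_distrib, sum_coord_sq_of_unit hω]
  norm_num

theorem divA_eq_of_hasFDerivAt {A : Ix → ℝ → Pt → ℝ} {A' : Ix → ℝ × Pt →L[ℝ] ℝ} {t : ℝ} {x : Pt}
    (hA : ∀ α, HasFDerivAt (Function.uncurry (A α)) (A' α) (t, x)) :
    divA A t x = -A' none (1, 0) + ∑ i, A' (some i) (0, EuclideanSpace.single i 1) := by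
  have hT : dTR (A none) t x = A' none (1, 0) := (hasDerivAt_curry_left (hA none)).deriv
  have hX (i : Fin 3) : dXR i (A (some i)) t x = A' (some i) (0, EuclideanSpace.single i 1) :=
    congr($((hasFDerivAt_curry_right (hA (some i))).fderiv) (EuclideanSpace.single i 1))
  simp only [divA, hT, hX]

theorem divA_add {A B : Ix → ℝ → Pt → ℝ} {t : ℝ} {x : Pt}
    (hA : ∀ α, DifferentiableAt ℝ (Function.uncurry (A α)) (t, x))
    (hB : ∀ α, DifferentiableAt ℝ (Function.uncurry (B α)) (t, x)) :
    divA (A + B) t x = divA A t x + divA B t x := by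
  rw [divA_eq_of_hasFDerivAt fun α => (hA α).hasFDerivAt,
    divA_eq_of_hasFDerivAt fun α => (hB α).hasFDerivAt,
    divA_eq_of_hasFDerivAt (A := A + B) fun α => (hA α).hasFDerivAt.add (hB α).hasFDerivAt]
  simp only [add_apply, Finset.sum_add_distrib]
  ring

end Divergence

section RadiationFieldDerivatives

variable {F : ℝ → Pt → ℂ} {q : ℝ} {ω : Pt}

theorem dq_eq_fderiv (hF : DifferentiableAt ℝ (Function.uncurry F) (q, ω)) :
    dq F q ω = fderiv ℝ (Function.uncurry F) (q, ω) (1, 0) :=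
  (hasDerivAt_curry_left hF.hasFDerivAt).deriv

theorem aRot_eq_fderiv (hF : DifferentiableAt ℝ (Function.uncurry F) (q, ω)) (i j : Fin 3) :
    aRot i j F q ω = fderiv ℝ (Function.uncurry F) (q, ω)
      (0, ω i • EuclideanSpace.single j 1 - ω j • EuclideanSpace.single i 1) := by
  have hdOm (k : Fin 3) : dOm k F q ω =
      fderiv ℝ (Function.uncurry F) (q, ω) (0, EuclideanSpace.single k 1) :=
    congr($((hasFDerivAt_curry_right hF.hasFDerivAt).fderiv) (EuclideanSpace.single k 1))
  have hlin := (fderiv ℝ (Function.uncurry F) (q, ω) ∘L .inr ℝ ℝ Pt).map_sub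
    (ω i • EuclideanSpace.single j 1) (ω j • EuclideanSpace.single i 1)
  simp only [map_smul] at hlin
  simp only [aRot, hdOm, ← Complex.real_smul]
  exact hlin.symm

theorem uncurry_dq_eq (hF : ContDiff ℝ 2 (Function.uncurry F)) :
    Function.uncurry (dq F) = fun p => fderiv ℝ (Function.uncurry F) p (1, 0) :=
  funext fun _ => dq_eq_fderiv (hF.differentiable two_ne_zero _)

theorem contDiff_dq (hF : ContDiff ℝ 2 (Function.uncurry F)) :
    ContDiff ℝ 1 (Function.uncurry (dq F)) := by
  rw [uncurry_dq_eq hF]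
  exact (hF.fderiv_right (m := 1) (by norm_num)).clm_apply contDiff_const

theorem dq_aRot (hF : ContDiff ℝ 2 (Function.uncurry F)) (i j : Fin 3) (q : ℝ) (ω : Pt) :
    dq (aRot i j F) q ω = aRot i j (dq F) q ω := by
  have hdF : DifferentiableAt ℝ (fderiv ℝ (Function.uncurry F)) (q, ω) :=
    (hF.fderiv_right (m := 1) (by norm_num)).differentiable one_ne_zero _
  have hsymm : IsSymmSndFDerivAt ℝ (Function.uncurry F) (q, ω) :=
    hF.contDiffAt.isSymmSndFDerivAt (by simp)
  set v : Pt := ω i • EuclideanSpace.single j 1 - ω j • EuclideanSpace.single i 1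
  have hrot : (fun s => aRot i j F s ω) = fun s => fderiv ℝ (Function.uncurry F) (s, ω) (0, v) :=
    funext fun s => aRot_eq_fderiv (hF.differentiable two_ne_zero _) i j
  have hleft := (hasDerivAt_curry_left (f := fun s y => fderiv ℝ (Function.uncurry F) (s, y) (0, v))
    (hdF.hasFDerivAt.clm_apply (hasFDerivAt_const (0, v) (q, ω)))).deriv
  have hright : aRot i j (dq F) q ω
      = fderiv ℝ (fderiv ℝ (Function.uncurry F)) (q, ω) (0, v) (1, 0) := by
    rw [aRot_eq_fderiv ((contDiff_dq hF).differentiable one_ne_zero _), uncurry_dq_eq hF,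
      fderiv_clm_apply hdF (differentiableAt_const _)]
    simp [v]
  rw [dq, hrot, hleft, hright, ← hsymm.eq]
  simp

theorem eq_sum_rotation_of_inner_eq_zero {w : Pt} (hω : ‖ω‖ = 1) (hw : ⟪ω, w⟫ = 0) :
    w = ∑ i, ∑ j, (ω i * w j) •
      (ω i • EuclideanSpace.single j (1 : ℝ) - ω j • EuclideanSpace.single i 1) := by
  have hω' := sum_coord_sq_of_unit hω
  simp only [PiLp.inner_apply, RCLike.inner_apply, conj_trivial, Fin.sum_univ_three] at hω' hw
  ext k
  fin_cases k <;> simp [Fin.sum_univ_three]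
  · linear_combination (-w 0) * hω' + ω 0 * hw
  · linear_combination (-w 1) * hω' + ω 1 * hw
  · linear_combination (-w 2) * hω' + ω 2 * hw

theorem norm_fderiv_tangential_le (hF : DifferentiableAt ℝ (Function.uncurry F) (q, ω)) {w : Pt}
    (hω : ‖ω‖ = 1) (hw : ⟪ω, w⟫ = 0) {K : ℝ} (hK : ∀ i j, ‖aRot i j F q ω‖ ≤ K) :
    ‖fderiv ℝ (Function.uncurry F) (q, ω) (0, w)‖ ≤ 9 * K * ‖w‖ := by
  set D := fderiv ℝ (Function.uncurry F) (q, ω) ∘L .inr ℝ ℝ Pt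
  have hsum : D w = ∑ i, ∑ j, (ω i * w j) • aRot i j F q ω :=
    calc D w = ∑ i, ∑ j, (ω i * w j) •
          D (ω i • EuclideanSpace.single j (1 : ℝ) - ω j • EuclideanSpace.single i 1) := by
          conv_lhs => rw [eq_sum_rotation_of_inner_eq_zero hω hw]
          simp only [map_sum, map_smul]
      _ = ∑ i, ∑ j, (ω i * w j) • aRot i j F q ω := by
          simp only [aRot_eq_fderiv hF]
          rfl
  have hterm (i j : Fin 3) : ‖(ω i * w j) • aRot i j F q ω‖ ≤ 1 * ‖w‖ * K := by
    rw [norm_smul, norm_mul]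
    gcongr
    · exact (PiLp.norm_apply_le ω i).trans hω.le
    · exact PiLp.norm_apply_le w j
    · exact hK i j
  calc ‖D w‖ ≤ ∑ _i : Fin 3, ∑ _j : Fin 3, 1 * ‖w‖ * K :=
        hsum ▸ norm_sum_le_of_le _ fun i _ => norm_sum_le_of_le _ fun j _ => hterm i j
    _ = 9 * K * ‖w‖ := by simp; ring

end RadiationFieldDerivatives

section WeightedBounds

theorem jb_sq (q : ℝ) : jb q ^ 2 = 1 + q ^ 2 := Real.sq_sqrt (by positivity)

theorem one_le_jb (q : ℝ) : 1 ≤ jb q := Real.one_le_sqrt.mpr (by nlinarith [sq_nonneg q])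

theorem jb_pos (q : ℝ) : 0 < jb q := one_pos.trans_le (one_le_jb q)

theorem jb_rpow_mul_jb_rpow_le {γ : ℝ} (hγ : 1 / 2 ≤ γ) (q : ℝ) :
    jb q ^ (-γ) * jb q ^ (-(γ + 1)) ≤ (1 + q ^ 2)⁻¹ :=
  calc jb q ^ (-γ) * jb q ^ (-(γ + 1)) = jb q ^ (-γ + -(γ + 1)) := (rpow_add (jb_pos q) _ _).symm
    _ ≤ jb q ^ (-2 : ℝ) := rpow_le_rpow_of_exponent_le (one_le_jb q) (by linarith)
    _ = (1 + q ^ 2)⁻¹ := by rw [rpow_neg (jb_pos q).le, rpow_ofNat, jb_sq]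

theorem norm_mul_le_of_jb_decay {R : Type*} [NormedRing R] {γ K M q : ℝ} {a b : R}
    (hγ : 1 / 2 ≤ γ) (ha : ‖a‖ ≤ K * jb q ^ (-γ)) (hb : ‖b‖ ≤ M * jb q ^ (-(γ + 1))) :
    ‖a * b‖ ≤ K * M * (1 + q ^ 2)⁻¹ := by
  have hK : 0 ≤ K := nonneg_of_mul_nonneg_left ((norm_nonneg a).trans ha)
    (rpow_pos_of_pos (jb_pos q) _)
  have hM : 0 ≤ M := nonneg_of_mul_nonneg_left ((norm_nonneg b).trans hb)
    (rpow_pos_of_pos (jb_pos q) _)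
  calc ‖a * b‖ ≤ ‖a‖ * ‖b‖ := norm_mul_le a b
    _ ≤ (K * jb q ^ (-γ)) * (M * jb q ^ (-(γ + 1))) :=
        mul_le_mul ha hb (norm_nonneg b) ((norm_nonneg a).trans ha)
    _ = K * M * (jb q ^ (-γ) * jb q ^ (-(γ + 1))) := by ring
    _ ≤ K * M * (1 + q ^ 2)⁻¹ := by gcongr; exact jb_rpow_mul_jb_rpow_le hγ q

variable {N : ℕ} {γ M : ℝ} {F : ℝ → Pt → ℂ}

theorem RadBound.mono {N' : ℕ} (hF : RadBound N γ M F) (hN : N' ≤ N) : RadBound N' γ M F :=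
  fun k l hkl => hF k l (hkl.trans hN)

theorem RadBound.norm_aIter_le (hF : RadBound N γ M F) {l : List (Fin 3 × Fin 3)}
    (hl : l.length ≤ N) (q : ℝ) {ω : Pt} (hω : ‖ω‖ = 1) :
    ‖aIter l F q ω‖ ≤ M * jb q ^ (-γ) := by
  rw [rpow_neg (jb_pos q).le, ← div_eq_mul_inv, le_div_iff₀ (rpow_pos_of_pos (jb_pos q) _)]
  exact hF 0 l (by simpa) q ω hω

theorem RadBound.norm_dq_aIter_le (hF : RadBound N γ M F) {l : List (Fin 3 × Fin 3)}
    (hl : l.length + 1 ≤ N) (q : ℝ) {ω : Pt} (hω : ‖ω‖ = 1) :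
    ‖dq (aIter l F) q ω‖ ≤ M * jb q ^ (-(γ + 1)) := by
  have hweighted : ‖(jb q : ℂ) * dq (aIter l F) q ω‖ * jb q ^ γ ≤ M :=
    hF 1 l (by rwa [add_comm]) q ω hω
  rw [norm_mul, Complex.norm_of_nonneg (jb_pos q).le] at hweighted
  rw [rpow_neg (jb_pos q).le, ← div_eq_mul_inv, le_div_iff₀ (rpow_pos_of_pos (jb_pos q) _),
    rpow_add_one (jb_pos q).ne']
  linarith

end WeightedBounds

section DecayingCurrents

/-- A density `j(q, ω)` on `ℝ × S²` which, together with its derivatives along the sphere, decays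
like `(1 + q²)⁻¹`. It stands for the null current `Im(Φ conj(∂_qΦ))`; only values and tangential
derivatives at unit `ω` are constrained, `j` being extended off the sphere. -/
structure DecayingCurrent (C : ℝ) (j : ℝ → Pt → ℝ) : Prop where
  contDiff : ContDiff ℝ 1 (Function.uncurry j)
  norm_le : ∀ (q : ℝ) {ω : Pt}, ‖ω‖ = 1 → ‖j q ω‖ ≤ C * (1 + q ^ 2)⁻¹
  norm_fderiv_le : ∀ (q : ℝ) {ω w : Pt}, ‖ω‖ = 1 → ⟪ω, w⟫ = 0 →
    ‖fderiv ℝ (Function.uncurry j) (q, ω) (0, w)‖ ≤ C * (1 + q ^ 2)⁻¹ * ‖w‖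

/-- The scalar factor `Im(Φ conj(∂_qΦ))` of the current `𝒥_α = L_α Im(Φ conj(∂_qΦ))`. -/
def nullCurrent (Φ : ℝ → Pt → ℂ) (q : ℝ) (ω : Pt) : ℝ :=
  (Φ q ω * (starRingEnd ℂ) (dq Φ q ω)).im

variable {γ M : ℝ} {Φ : ℝ → Pt → ℂ}

theorem contDiff_nullCurrent (hΦ : ContDiff ℝ 2 (Function.uncurry Φ)) :
    ContDiff ℝ 1 (Function.uncurry (nullCurrent Φ)) :=
  Complex.imCLM.contDiff.comp <| (hΦ.of_le one_le_two).mul <|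
    Complex.conjCLE.contDiff.comp (contDiff_dq hΦ)

theorem fderiv_nullCurrent_apply (hΦ : ContDiff ℝ 2 (Function.uncurry Φ)) (p v : ℝ × Pt) :
    fderiv ℝ (Function.uncurry (nullCurrent Φ)) p v =
      (Φ p.1 p.2 * (starRingEnd ℂ) (fderiv ℝ (Function.uncurry (dq Φ)) p v)
        + fderiv ℝ (Function.uncurry Φ) p v * (starRingEnd ℂ) (dq Φ p.1 p.2)).im := by
  have hΦ' := (hΦ.differentiable two_ne_zero p).hasFDerivAt
  have hdq := ((contDiff_dq hΦ).differentiable one_ne_zero p).hasFDerivAt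
  have hmul := hΦ'.mul (Complex.conjCLE.toContinuousLinearMap.hasFDerivAt.comp p hdq)
  have him := congr($((Complex.imCLM.hasFDerivAt.comp p hmul).fderiv) v)
  refine him.trans ?_
  simp [Function.uncurry, mul_comm]

theorem decayingCurrent_nullCurrent (hγ : 1 / 2 ≤ γ) (hΦ : ContDiff ℝ 2 (Function.uncurry Φ))
    (hM : RadBound 2 γ M Φ) : DecayingCurrent (18 * M ^ 2) (nullCurrent Φ) where
  contDiff := contDiff_nullCurrent hΦ
  norm_le q ω hω := by
    have hprod := norm_mul_le_of_jb_decay (b := (starRingEnd ℂ) (dq Φ q ω)) hγ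
      (hM.norm_aIter_le (l := []) (by simp) q hω)
      ((RCLike.norm_conj _).trans_le (hM.norm_dq_aIter_le (l := []) (by simp) q hω))
    calc ‖nullCurrent Φ q ω‖ ≤ M * M * (1 + q ^ 2)⁻¹ := (Complex.abs_im_le_norm _).trans hprod
      _ ≤ 18 * M ^ 2 * (1 + q ^ 2)⁻¹ :=
        mul_le_mul_of_nonneg_right (by nlinarith [sq_nonneg M]) (by positivity)
  norm_fderiv_le q ω w hω hw := by
    have hdΦ := norm_fderiv_tangential_le (hΦ.differentiable two_ne_zero _) hω hw
      fun i j => hM.norm_aIter_le (l := [(i, j)]) (by simp) q hω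
    have hddq := norm_fderiv_tangential_le ((contDiff_dq hΦ).differentiable one_ne_zero _) hω hw
      fun i j => (congr_arg norm (dq_aRot hΦ i j q ω)).symm.trans_le
        (hM.norm_dq_aIter_le (l := [(i, j)]) (by simp) q hω)
    rw [fderiv_nullCurrent_apply hΦ]
    refine ((Complex.abs_im_le_norm _).trans (norm_add_le _ _)).trans ?_
    have h₁ := norm_mul_le_of_jb_decay (K := M) (M := 9 * M * ‖w‖) hγ
      (hM.norm_aIter_le (l := []) (by simp) q hω)
      ((RCLike.norm_conj _).trans_le (hddq.trans_eq (by ring)))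
    have h₂ := norm_mul_le_of_jb_decay (K := 9 * M * ‖w‖) (M := M) hγ
      (hdΦ.trans_eq (by ring))
      ((RCLike.norm_conj _).trans_le (hM.norm_dq_aIter_le (l := []) (by simp) q hω))
    exact (add_le_add h₁ h₂).trans_eq (by ring)

end DecayingCurrents

section AngularIntegrals

variable {C : ℝ} {j : ℝ → Pt → ℝ}

theorem DecayingCurrent.nonneg (hj : DecayingCurrent C j) : 0 ≤ C := by
  have hbound := hj.norm_le 0 (ω := EuclideanSpace.single 0 1) (by simp)
  simpa using (norm_nonneg _).trans hbound

theorem DecayingCurrent.continuous (hj : DecayingCurrent C j) : Continuous (Function.uncurry j) :=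
  hj.contDiff.continuous

theorem DecayingCurrent.integrable (hj : DecayingCurrent C j) {ω : Pt} (hω : ‖ω‖ = 1) :
    Integrable (fun η => j η ω) :=
  (integrable_inv_one_add_sq.const_mul C).mono'
    (hj.continuous.comp (Continuous.prodMk_left ω)).aestronglyMeasurable
    (ae_of_all _ fun η => hj.norm_le η hω)

/-- The differential at `x` of `y ↦ j η (y / |y|)`. -/
def angularDeriv (j : ℝ → Pt → ℝ) (η : ℝ) (x : Pt) : Pt →L[ℝ] ℝ :=
  fderiv ℝ (Function.uncurry j) (η, NormedSpace.normalize x) ∘L .inr ℝ ℝ Pt ∘L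
    (‖x‖⁻¹ • (ℝ ∙ NormedSpace.normalize x)ᗮ.starProjection)

theorem DecayingCurrent.hasFDerivAt_comp_normalize (hj : DecayingCurrent C j) (η : ℝ) {x : Pt}
    (hx : x ≠ 0) :
    HasFDerivAt (fun y => j η (NormedSpace.normalize y)) (angularDeriv j η x) x :=
  (hasFDerivAt_curry_right (hj.contDiff.differentiable one_ne_zero _).hasFDerivAt).comp x
    (hasFDerivAt_normalize hx)

theorem DecayingCurrent.norm_angularDeriv_le (hj : DecayingCurrent C j) (η : ℝ) {x : Pt}
    (hx : x ≠ 0) : ‖angularDeriv j η x‖ ≤ C * ‖x‖⁻¹ * (1 + η ^ 2)⁻¹ := by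
  have hC := hj.nonneg
  refine ContinuousLinearMap.opNorm_le_bound _ (by positivity) fun v => ?_
  set w := (ℝ ∙ NormedSpace.normalize x)ᗮ.starProjection v
  have hw : ⟪NormedSpace.normalize x, ‖x‖⁻¹ • w⟫ = 0 := by
    rw [real_inner_smul_right, Submodule.mem_orthogonal_singleton_iff_inner_right.mp
      (Submodule.starProjection_apply_mem _ v), mul_zero]
  calc ‖angularDeriv j η x v‖
      ≤ C * (1 + η ^ 2)⁻¹ * ‖‖x‖⁻¹ • w‖ :=
        hj.norm_fderiv_le η (NormedSpace.norm_normalize hx) hw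
    _ = C * (1 + η ^ 2)⁻¹ * (‖x‖⁻¹ * ‖w‖) := by rw [norm_smul, norm_inv, norm_norm]
    _ ≤ C * (1 + η ^ 2)⁻¹ * (‖x‖⁻¹ * ‖v‖) := by
        gcongr
        exact Submodule.norm_starProjection_apply_le _ v
    _ = C * ‖x‖⁻¹ * (1 + η ^ 2)⁻¹ * ‖v‖ := by ring

theorem DecayingCurrent.differentiableAt_setIntegral (hj : DecayingCurrent C j) (S : Set ℝ)
    {x₀ : Pt} (hx₀ : x₀ ≠ 0) :
    DifferentiableAt ℝ (fun x => ∫ η in S, j η (NormedSpace.normalize x)) x₀ := by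
  have hC := hj.nonneg
  have hpos : 0 < ‖x₀‖ := norm_pos_iff.mpr hx₀
  have hnhds : {x : Pt | ‖x₀‖ / 2 < ‖x‖} ∈ 𝓝 x₀ :=
    (isOpen_lt continuous_const continuous_norm).mem_nhds (half_lt_self hpos)
  have hne {x : Pt} (hx : ‖x₀‖ / 2 < ‖x‖) : x ≠ 0 :=
    norm_pos_iff.mp ((half_pos hpos).trans hx)
  have hmeas : Continuous fun η => angularDeriv j η x₀ :=
    ((hj.contDiff.continuous_fderiv one_ne_zero).comp (Continuous.prodMk_left _)).clm_comp
      continuous_const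
  refine (hasFDerivAt_integral_of_dominated_of_fderiv_le (F' := fun x η => angularDeriv j η x)
    (bound := fun η => C * (‖x₀‖ / 2)⁻¹ * (1 + η ^ 2)⁻¹) hnhds
    (Eventually.of_forall fun x => ?_) ?_ hmeas.aestronglyMeasurable (ae_of_all _ fun η x hx => ?_)
    (integrable_inv_one_add_sq.const_mul _).integrableOn
    (ae_of_all _ fun η x hx => hj.hasFDerivAt_comp_normalize η (hne hx))).differentiableAt
  · exact (hj.continuous.comp (Continuous.prodMk_left _)).aestronglyMeasurable
  · exact (hj.integrable (NormedSpace.norm_normalize hx₀)).integrableOn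
  · have hx' : ‖x₀‖ / 2 ≤ ‖x‖ := le_of_lt hx
    refine (hj.norm_angularDeriv_le η (hne hx)).trans ?_
    gcongr

theorem hasFDerivAt_intervalIntegral_prod {E G : Type*} [NormedAddCommGroup E] [NormedSpace ℝ E]
    [NormedAddCommGroup G] [NormedSpace ℝ G] [CompleteSpace G] {f : ℝ × E → G} (hf : Continuous f)
    (s : ℝ) (y : E) :
    HasFDerivAt (fun p : ℝ × E => ∫ η in s..p.1, f (η, p.2))
      ((ContinuousLinearMap.fst ℝ ℝ E).smulRight (f (s, y))) (s, y) := by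
  rw [hasFDerivAt_iff_isLittleO, Asymptotics.isLittleO_iff]
  intro c hc
  obtain ⟨δ, hδ, hclose⟩ := Metric.continuousAt_iff.mp (hf.continuousAt (x := (s, y))) c hc
  filter_upwards [Metric.ball_mem_nhds (s, y) hδ] with p hp
  have hremainder : (∫ η in s..p.1, f (η, p.2)) - (∫ η in s..s, f (η, y))
      - (p.1 - s) • f (s, y) = ∫ η in s..p.1, (f (η, p.2) - f (s, y)) := by
    have hslice : Continuous fun η => f (η, p.2) := hf.comp (Continuous.prodMk_left p.2)
    rw [intervalIntegral.integral_sub (hslice.intervalIntegrable _ _) intervalIntegrable_const]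
    simp
  have hbound : ‖∫ η in s..p.1, (f (η, p.2) - f (s, y))‖ ≤ c * |p.1 - s| := by
    refine intervalIntegral.norm_integral_le_of_norm_le_const fun η hη => ?_
    have hη' : dist η s ≤ dist p.1 s :=
      Set.abs_sub_left_of_mem_uIcc (Set.uIoc_subset_uIcc hη)
    exact (dist_eq_norm (f (η, p.2)) _).symm.trans_le
      (hclose ((max_le_max hη' le_rfl).trans_lt hp)).le
  calc _ = ‖∫ η in s..p.1, (f (η, p.2) - f (s, y))‖ := congr_arg norm hremainder
    _ ≤ c * |p.1 - s| := hbound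
    _ ≤ c * ‖p - (s, y)‖ := by gcongr; exact norm_fst_le (p - (s, y))

theorem DecayingCurrent.differentiableAt_integral_Iic (hj : DecayingCurrent C j) {p₀ : ℝ × Pt}
    (hp₀ : p₀.2 ≠ 0) :
    DifferentiableAt ℝ (fun p => ∫ η in Set.Iic (nullCoord p).1, j η (nullCoord p).2) p₀ := by
  set q := (nullCoord p₀).1
  have hfixed : DifferentiableAt ℝ (fun p : ℝ × Pt => ∫ η in Set.Iic q, j η (nullCoord p).2) p₀ :=
    (hj.differentiableAt_setIntegral (Set.Iic q) hp₀).comp p₀ differentiableAt_snd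
  have hmoving : DifferentiableAt ℝ
      (fun p : ℝ × Pt => ∫ η in q..(nullCoord p).1, j η (nullCoord p).2) p₀ :=
    DifferentiableAt.comp (f := nullCoord) p₀
      (hasFDerivAt_intervalIntegral_prod hj.continuous q (nullCoord p₀).2).differentiableAt
      (hasFDerivAt_nullCoord hp₀).differentiableAt
  refine (hfixed.add hmoving).congr_of_eventuallyEq ?_
  filter_upwards [continuousAt_snd.eventually_ne hp₀] with p hp
  have hint := hj.integrable (NormedSpace.norm_normalize hp)
  exact eq_add_of_sub_eq' <|
    intervalIntegral.integral_Iic_sub_Iic hint.integrableOn hint.integrableOn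

theorem DecayingCurrent.differentiableAt_integral_Ioi (hj : DecayingCurrent C j) {p₀ : ℝ × Pt}
    (hp₀ : p₀.2 ≠ 0) :
    DifferentiableAt ℝ (fun p => ∫ η in Set.Ioi (nullCoord p).1, j η (nullCoord p).2) p₀ := by
  have htotal : DifferentiableAt ℝ
      (fun p : ℝ × Pt => ∫ η in Set.univ, j η (nullCoord p).2) p₀ :=
    (hj.differentiableAt_setIntegral Set.univ hp₀).comp p₀ differentiableAt_snd
  refine (htotal.sub (hj.differentiableAt_integral_Iic hp₀)).congr_of_eventuallyEq ?_
  filter_upwards [continuousAt_snd.eventually_ne hp₀] with p hp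
  have hint := hj.integrable (NormedSpace.norm_normalize hp)
  rw [Pi.sub_apply, setIntegral_univ]
  exact eq_sub_of_add_eq' <|
    intervalIntegral.integral_Iic_add_Ioi hint.integrableOn hint.integrableOn

end AngularIntegrals

section OutgoingFields

variable {q r : ℝ} {ω : Pt}

theorem sum_coord_mul_apply_single (f : ℝ × Pt →L[ℝ] ℝ) (w : Pt) :
    ∑ i, w i * f (0, EuclideanSpace.single i 1) = f (0, w) :=
  calc ∑ i, w i * f (0, EuclideanSpace.single i 1)
      = (f ∘L .inr ℝ ℝ Pt) (∑ i, w i • EuclideanSpace.single i (1 : ℝ)) := by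
        simp only [map_sum, map_smul, smul_eq_mul]
        rfl
    _ = f (0, w) := by
        have hsum : ∑ i, w i • EuclideanSpace.single i (1 : ℝ) = w := by
          simpa using (EuclideanSpace.basisFun (Fin 3) ℝ).sum_repr w
        rw [hsum]
        rfl

theorem hasFDerivAt_normalize_apply_ray (hr : 0 < r) (hω : ‖ω‖ = 1) (i : Fin 3) :
    HasFDerivAt (fun p : ℝ × Pt => NormedSpace.normalize p.2 i)
      (EuclideanSpace.proj i ∘L (r⁻¹ • (ℝ ∙ ω)ᗮ.starProjection ∘L .snd ℝ ℝ Pt))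
      (r - q, r • ω) :=
  (EuclideanSpace.proj i : Pt →L[ℝ] ℝ).hasFDerivAt.comp (r - q, r • ω)
    (hasFDerivAt_nullCoord_ray hr hω).snd

theorem differentiableAt_Llow_normalize (α : Ix) {p : ℝ × Pt} (hp : p.2 ≠ 0) :
    DifferentiableAt ℝ (fun p : ℝ × Pt => Llow α (NormedSpace.normalize p.2)) p := by
  cases α with
  | none => exact differentiableAt_const _
  | some i =>
    exact ((EuclideanSpace.proj i : Pt →L[ℝ] ℝ).hasFDerivAt.comp p
      (hasFDerivAt_nullCoord hp).snd).differentiableAt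

-- `∂^α (L_α G) = (∂_t + ∂_r) G + G div ω`, and the unit radial field has divergence `2 / r`.
theorem divA_Llow_mul_ray {G : ℝ → Pt → ℝ} {G' : ℝ} (hr : 0 < r) (hω : ‖ω‖ = 1)
    (hG : DifferentiableAt ℝ (Function.uncurry G) (r - q, r • ω))
    (hray : HasDerivAt (fun ρ => G (ρ - q) (ρ • ω)) G' r) :
    divA (fun α t x => Llow α (NormedSpace.normalize x) * G t x) (r - q) (r • ω)
      = G' + 2 / r * G (r - q) (r • ω) := by
  set D := fderiv ℝ (Function.uncurry G) (r - q, r • ω)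
  have hcurve : HasDerivAt (fun ρ : ℝ => (ρ - q, ρ • ω)) (1, ω) r := by
    simpa using ((hasDerivAt_id r).sub_const q).prodMk ((hasDerivAt_id r).smul_const ω)
  have hG' : D (1, 0) + D (0, ω) = G' := by
    rw [← map_add]
    simpa using (hG.hasFDerivAt.comp_hasDerivAt (f := fun ρ => (ρ - q, ρ • ω)) r hcurve).unique hray
  have hpotential : ∀ α, HasFDerivAt
      (Function.uncurry fun t x => Llow α (NormedSpace.normalize x) * G t x) _ (r - q, r • ω) :=
    fun α => ((differentiableAt_Llow_normalize α (smul_unit_ne_zero hr hω)).hasFDerivAt.mul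
      hG.hasFDerivAt)
  have hcoord (i : Fin 3) : fderiv ℝ (fun p : ℝ × Pt => NormedSpace.normalize p.2 i)
      (r - q, r • ω) = _ := (hasFDerivAt_normalize_apply_ray hr hω i).fderiv
  rw [divA_eq_of_hasFDerivAt hpotential]
  simp only [Llow, hcoord, normalize_smul_of_unit hr hω, fderiv_const_apply,
    add_apply, smul_apply, zero_apply, smul_eq_mul, Finset.sum_add_distrib,
    ContinuousLinearMap.comp_apply, ContinuousLinearMap.coe_snd', PiLp.proj_apply,
    PiLp.smul_apply, ← Finset.mul_sum, sum_starProjection_orthogonal_apply hω]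
  rw [sum_coord_mul_apply_single D, ← hG']
  ring

end OutgoingFields

section LogarithmicPart

theorem differentiable_jb : Differentiable ℝ jb := fun a =>
  DifferentiableAt.sqrt (by fun_prop) (by positivity)

theorem hasDerivAt_log_jb (a : ℝ) : HasDerivAt (fun s => Real.log (jb s)) (a / (1 + a ^ 2)) a := by
  have hlog : (fun s => Real.log (jb s)) = fun s => Real.log (1 + s ^ 2) / 2 :=
    funext fun s => Real.log_sqrt (by positivity)
  rw [hlog]
  refine ((((hasDerivAt_pow 2 a).const_add 1).log (by positivity)).div_const 2).congr_deriv ?_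
  field

theorem jb_neg (a : ℝ) : jb (-a) = jb a := by rw [jb, jb, neg_sq]

theorem jb_le_one_add_abs (a : ℝ) : jb a ≤ 1 + |a| := by
  rw [jb, Real.sqrt_le_left (by positivity)]
  nlinarith [abs_nonneg a, sq_abs a]

/-- The factor `ln(⟨t + r⟩ / ⟨t - r⟩)` at distance `ρ` along the light ray `r - t = q`. -/
def rayLog (q ρ : ℝ) : ℝ := Real.log (jb (2 * ρ - q)) - Real.log (jb q)

theorem log_jb_div_jb_ray (q ρ : ℝ) :
    Real.log (jb (ρ - q + ρ) / jb (ρ - q - ρ)) = rayLog q ρ := by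
  rw [Real.log_div (jb_pos _).ne' (jb_pos _).ne', rayLog, sub_sub_cancel_left, jb_neg]
  ring_nf

theorem hasDerivAt_rayLog (q ρ : ℝ) :
    HasDerivAt (rayLog q) (2 * ((2 * ρ - q) / (1 + (2 * ρ - q) ^ 2))) ρ := by
  have hlin : HasDerivAt (fun ρ : ℝ => 2 * ρ - q) 2 ρ := by
    simpa using ((hasDerivAt_id ρ).const_mul 2).sub_const q
  rw [mul_comm]
  exact ((hasDerivAt_log_jb (2 * ρ - q)).comp ρ hlin).sub_const (Real.log (jb q))

theorem tendsto_two_mul_sub_atTop (q : ℝ) : Tendsto (fun ρ : ℝ => 2 * ρ - q) atTop atTop :=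
  tendsto_atTop_add_const_right _ (-q) (tendsto_id.const_mul_atTop two_pos)

theorem tendsto_deriv_rayLog (q : ℝ) :
    Tendsto (fun ρ => 2 * ((2 * ρ - q) / (1 + (2 * ρ - q) ^ 2))) atTop (𝓝 0) := by
  have hdecay : Tendsto (fun s : ℝ => s / (1 + s ^ 2)) atTop (𝓝 0) := by
    refine squeeze_zero' ?_ ?_ tendsto_inv_atTop_zero
    · filter_upwards [eventually_ge_atTop 0] with s hs
      positivity
    · filter_upwards [eventually_gt_atTop 0] with s hs
      rw [div_le_iff₀ (by positivity)]
      field_simp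
      nlinarith
  simpa using (hdecay.comp (tendsto_two_mul_sub_atTop q)).const_mul 2

theorem tendsto_rayLog_div (q : ℝ) : Tendsto (fun ρ => rayLog q ρ / ρ) atTop (𝓝 0) := by
  have htop : Tendsto (fun ρ => jb (2 * ρ - q)) atTop atTop :=
    tendsto_atTop_mono (fun ρ => Real.le_sqrt_of_sq_le (by linarith))
      (tendsto_two_mul_sub_atTop q)
  have hlinear : (fun ρ => jb (2 * ρ - q)) =O[atTop] (id : ℝ → ℝ) := by
    refine Asymptotics.IsBigO.of_bound 3 ?_
    filter_upwards [eventually_ge_atTop (1 + |q|)] with ρ hρ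
    rw [Real.norm_of_nonneg (jb_pos _).le, id, Real.norm_eq_abs]
    have habs := (jb_le_one_add_abs (2 * ρ - q)).trans
      (add_le_add_right (abs_sub (2 * ρ) q) 1)
    rw [abs_mul, abs_two] at habs
    linarith [le_abs_self ρ]
  have hlog := (Real.isLittleO_log_id_atTop.comp_tendsto htop).trans_isBigO hlinear
  exact (hlog.sub (Asymptotics.isLittleO_const_id_atTop _)).tendsto_div_nhds_zero

/-- The coefficient of the logarithm in `A_{α,asy}`, up to `L_α`: minus the charge that has left
along the direction `ω` before `q` in the interior, the charge still to come outside. -/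
def logCoeff (χ : ℝ → ℝ) (j : ℝ → Pt → ℝ) (q : ℝ) (ω : Pt) : ℝ :=
  -(∫ η in Set.Iic q, j η ω) * χ q + (∫ η in Set.Ioi q, j η ω) * (1 - χ q)

/-- The common scalar factor of the logarithmic terms of `A_{α,asy}`. -/
def logProfile (χ : ℝ → ℝ) (j : ℝ → Pt → ℝ) (t : ℝ) (x : Pt) : ℝ :=
  1 / (2 * ‖x‖) * Real.log (jb (t + ‖x‖) / jb (t - ‖x‖))
    * logCoeff χ j (‖x‖ - t) (NormedSpace.normalize x)

/-- The logarithmic part of the asymptotic potential `A_{α,asy}`. -/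
def logPotential (χ : ℝ → ℝ) (j : ℝ → Pt → ℝ) (α : Ix) (t : ℝ) (x : Pt) : ℝ :=
  Llow α (NormedSpace.normalize x) * logProfile χ j t x

variable {C : ℝ} {j : ℝ → Pt → ℝ} {χ : ℝ → ℝ}

theorem differentiableAt_logProfile (hj : DecayingCurrent C j) {p : ℝ × Pt} (hp : p.2 ≠ 0)
    (hχ : DifferentiableAt ℝ χ (‖p.2‖ - p.1)) :
    DifferentiableAt ℝ (Function.uncurry (logProfile χ j)) p := by
  have hnorm : DifferentiableAt ℝ (fun p : ℝ × Pt => ‖p.2‖) p :=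
    (hasFDerivAt_norm hp).differentiableAt.comp p differentiableAt_snd
  have hcutoff : DifferentiableAt ℝ (fun p : ℝ × Pt => χ (‖p.2‖ - p.1)) p :=
    hχ.comp p (hnorm.sub differentiableAt_fst)
  have hplus : DifferentiableAt ℝ (fun p : ℝ × Pt => jb (p.1 + ‖p.2‖)) p :=
    (differentiable_jb _).comp p (differentiableAt_fst.add hnorm)
  have hminus : DifferentiableAt ℝ (fun p : ℝ × Pt => jb (p.1 - ‖p.2‖)) p :=
    (differentiable_jb _).comp p (differentiableAt_fst.sub hnorm)
  have hratio : DifferentiableAt ℝ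
      (fun p : ℝ × Pt => jb (p.1 + ‖p.2‖) / jb (p.1 - ‖p.2‖)) p := by
    fun_prop (disch := exact (jb_pos _).ne')
  have hlog := hratio.log (div_pos (jb_pos _) (jb_pos _)).ne'
  have hfactor : DifferentiableAt ℝ (fun p : ℝ × Pt => 1 / (2 * ‖p.2‖)) p := by
    fun_prop (disch := simpa)
  exact (hfactor.mul hlog).mul (((hj.differentiableAt_integral_Iic hp).neg.mul hcutoff).add
    ((hj.differentiableAt_integral_Ioi hp).mul ((differentiableAt_const 1).sub hcutoff)))

theorem differentiableAt_logPotential (hj : DecayingCurrent C j) {p : ℝ × Pt} (hp : p.2 ≠ 0)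
    (hχ : DifferentiableAt ℝ χ (‖p.2‖ - p.1)) (α : Ix) :
    DifferentiableAt ℝ (Function.uncurry (logPotential χ j α)) p :=
  (differentiableAt_Llow_normalize α hp).mul (differentiableAt_logProfile hj hp hχ)

variable {q : ℝ} {ω : Pt}

theorem logProfile_ray {ρ : ℝ} (hρ : 0 < ρ) (hω : ‖ω‖ = 1) :
    logProfile χ j (ρ - q) (ρ • ω) = rayLog q ρ / (2 * ρ) * logCoeff χ j q ω := by
  rw [logProfile, norm_smul_of_unit hρ hω, normalize_smul_of_unit hρ hω, log_jb_div_jb_ray,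
    sub_sub_cancel]
  ring

theorem tendsto_mul_divA_logPotential (hj : DecayingCurrent C j) (hω : ‖ω‖ = 1)
    (hχ : DifferentiableAt ℝ χ q) :
    Tendsto (fun r => r * divA (logPotential χ j) (r - q) (r • ω)) atTop (𝓝 0) := by
  have hlim := (((tendsto_deriv_rayLog q).add (tendsto_rayLog_div q)).div_const 2).mul_const
    (logCoeff χ j q ω)
  rw [add_zero, zero_div, zero_mul] at hlim
  refine hlim.congr' ?_
  filter_upwards [eventually_gt_atTop 0] with r hr
  have hray := (((hasDerivAt_rayLog q r).div ((hasDerivAt_id r).const_mul 2)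
    (mul_ne_zero two_ne_zero hr.ne')).mul_const (logCoeff χ j q ω)).congr_of_eventuallyEq
    ((eventually_gt_nhds hr).mono fun ρ hρ => logProfile_ray (χ := χ) (j := j) (q := q) hρ hω)
  have hdiff := differentiableAt_logProfile hj (p := (r - q, r • ω)) (χ := χ)
    (smul_unit_ne_zero hr hω) (by rwa [norm_smul_of_unit hr hω, sub_sub_cancel])
  have hdiv := divA_Llow_mul_ray hr hω hdiff hray
  rw [show logPotential χ j = fun α t x => Llow α (NormedSpace.normalize x) * logProfile χ j t x
    from rfl, hdiv, logProfile_ray hr hω]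
  simp only [id]
  field

end LogarithmicPart

section RadiationPart

/-- The potential `F_α(r - t, x / r) / r` attached to radiation fields `F_α`. -/
def radiationPotential (F : Ix → ℝ → Pt → ℝ) (α : Ix) (t : ℝ) (x : Pt) : ℝ :=
  F α (‖x‖ - t) (NormedSpace.normalize x) / ‖x‖

variable {F : Ix → ℝ → Pt → ℝ} {q r : ℝ} {ω : Pt}

theorem hasFDerivAt_radiationPotential {F' : ℝ × Pt →L[ℝ] ℝ} {α : Ix} (hr : 0 < r) (hω : ‖ω‖ = 1)
    (hF : HasFDerivAt (Function.uncurry (F α)) F' (q, ω)) :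
    HasFDerivAt (Function.uncurry (radiationPotential F α))
      (F α q ω • (-(r ^ 2)⁻¹ • innerSL ℝ ω ∘L .snd ℝ ℝ Pt)
        + r⁻¹ • F' ∘L (innerSL ℝ ω ∘L .snd ℝ ℝ Pt - .fst ℝ ℝ Pt).prod
            (r⁻¹ • (ℝ ∙ ω)ᗮ.starProjection ∘L .snd ℝ ℝ Pt)) (r - q, r • ω) := by
  have hF' : HasFDerivAt (Function.uncurry (F α)) F' (nullCoord (r - q, r • ω)) := by
    rwa [nullCoord_ray hr hω]
  have hprofile := hF'.comp (f := nullCoord) (r - q, r • ω) (hasFDerivAt_nullCoord_ray hr hω)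
  have hnorm : HasFDerivAt (fun p : ℝ × Pt => ‖p.2‖) _ (r - q, r • ω) :=
    (hasFDerivAt_norm (smul_unit_ne_zero hr hω)).comp (r - q, r • ω) hasFDerivAt_snd
  have hinv : HasFDerivAt (fun p : ℝ × Pt => ‖p.2‖⁻¹) _ (r - q, r • ω) :=
    (hasDerivAt_inv (by rw [norm_smul_of_unit hr hω]; exact hr.ne')).comp_hasFDerivAt
      (r - q, r • ω) hnorm
  have hmul := hprofile.mul hinv
  simp only [Function.comp_apply, nullCoord_ray hr hω, norm_smul_of_unit hr hω,
    normalize_smul_of_unit hr hω] at hmul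
  exact hmul

theorem mul_divA_radiationPotential_ray {F' : Ix → ℝ × Pt →L[ℝ] ℝ} (hr : 0 < r) (hω : ‖ω‖ = 1)
    (hF : ∀ α, HasFDerivAt (Function.uncurry (F α)) (F' α) (q, ω)) :
    r * divA (radiationPotential F) (r - q) (r • ω) =
      F' none (1, 0) + ∑ i, ω i * F' (some i) (1, 0)
        + (∑ i, (F' (some i) (0, (ℝ ∙ ω)ᗮ.starProjection (EuclideanSpace.single i 1))
          - ω i * F (some i) q ω)) / r := by
  have hsplit (α : Ix) (a b : ℝ) (w : Pt) :
      F' α (a, b • w) = a * F' α (1, 0) + b * F' α (0, w) := by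
    rw [← smul_eq_mul, ← smul_eq_mul, ← map_smul, ← map_smul, ← map_add]
    simp
  have hneg : F' none (-1, 0) = -F' none (1, 0) := by simpa using hsplit none (-1) 0 0
  rw [divA_eq_of_hasFDerivAt fun α => hasFDerivAt_radiationPotential hr hω (hF α)]
  simp only [add_apply, sub_apply, smul_apply, smul_eq_mul, ContinuousLinearMap.comp_apply,
    ContinuousLinearMap.prod_apply, ContinuousLinearMap.coe_fst', ContinuousLinearMap.coe_snd',
    coe_innerSL_apply, EuclideanSpace.inner_single_right, conj_trivial, map_zero,
    smul_zero, zero_sub, sub_zero, one_mul, hneg, hsplit, Fin.sum_univ_three]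
  field_simp
  ring

theorem tendsto_mul_divA_radiationPotential (hω : ‖ω‖ = 1)
    (hF : ∀ α, DifferentiableAt ℝ (Function.uncurry (F α)) (q, ω)) :
    Tendsto (fun r => r * divA (radiationPotential F) (r - q) (r • ω)) atTop
      (𝓝 (deriv (fun s => F none s ω + ∑ i, ω i * F (some i) s ω) q)) := by
  have hderiv := (hasDerivAt_curry_left (hF none).hasFDerivAt).fun_add
    (HasDerivAt.fun_sum (u := Finset.univ)
      fun i _ => (hasDerivAt_curry_left (hF (some i)).hasFDerivAt).const_mul (ω i))
  rw [hderiv.deriv]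
  have hlim (a b : ℝ) : Tendsto (fun r : ℝ => a + b / r) atTop (𝓝 a) := by
    simpa using tendsto_const_nhds.add ((tendsto_const_nhds (x := b)).div_atTop tendsto_id)
  exact (hlim _ _).congr' <| (eventually_gt_atTop 0).mono fun r hr =>
    (mul_divA_radiationPotential_ray hr hω fun α => (hF α).hasFDerivAt).symm

end RadiationPart

section ParametricIntegrals

variable {Z E : Type*} [MeasurableSpace Z] {μ : Measure Z} [NormedAddCommGroup E] [NormedSpace ℝ E]
  {a : Z → ℝ} {ℓ : Z → E →L[ℝ] ℝ} {C δ : ℝ} {p₀ : E}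

theorem norm_smul_div_sq_le {c d C δ : ℝ} {f : E →L[ℝ] ℝ} (hδ : 0 < δ) (hd : δ ≤ d) (hf : ‖f‖ ≤ C) :
    ‖-(c / d ^ 2) • f‖ ≤ |c| * (C / δ ^ 2) := by
  have hd₀ := hδ.trans_le hd
  calc ‖-(c / d ^ 2) • f‖ = |c| / d ^ 2 * ‖f‖ := by
        rw [norm_smul, norm_neg, norm_div, norm_pow, Real.norm_eq_abs, Real.norm_of_nonneg hd₀.le]
    _ ≤ |c| / δ ^ 2 * C := by gcongr
    _ = |c| * (C / δ ^ 2) := by ring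

theorem hasFDerivAt_div_clm {c : ℝ} {f : E →L[ℝ] ℝ} {p : E} (hp : f p ≠ 0) :
    HasFDerivAt (fun p => c / f p) (-(c / f p ^ 2) • f) p := by
  refine (((hasDerivAt_inv hp).comp_hasFDerivAt p f.hasFDerivAt).const_mul c).congr_fderiv ?_
  rw [smul_smul, mul_neg, div_eq_mul_inv]

theorem aestronglyMeasurable_smul_div_sq (ha : AEStronglyMeasurable a μ)
    (hℓ : AEStronglyMeasurable ℓ μ) (p : E) :
    AEStronglyMeasurable (fun z => -(a z / ℓ z p ^ 2) • ℓ z) μ :=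
  (ha.aemeasurable.div
    ((hℓ.apply_continuousLinearMap p).aemeasurable.pow_const 2)).neg.aestronglyMeasurable.smul hℓ

theorem integrable_smul_div_sq (ha : Integrable a μ) (hℓ : AEStronglyMeasurable ℓ μ)
    (hC : ∀ z, ‖ℓ z‖ ≤ C) (hδ : 0 < δ) (hp₀ : ∀ z, δ ≤ ℓ z p₀) :
    Integrable (fun z => -(a z / ℓ z p₀ ^ 2) • ℓ z) μ :=
  (ha.abs.mul_const (C / δ ^ 2)).mono' (aestronglyMeasurable_smul_div_sq ha.1 hℓ p₀)
    (ae_of_all _ fun z => norm_smul_div_sq_le hδ (hp₀ z) (hC z))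

theorem integrable_div_clm (ha : Integrable a μ) (hℓ : AEStronglyMeasurable ℓ μ) (hδ : 0 < δ)
    (hp₀ : ∀ z, δ ≤ ℓ z p₀) : Integrable (fun z => a z / ℓ z p₀) μ := by
  refine (ha.abs.div_const δ).mono'
    (ha.1.aemeasurable.div (hℓ.apply_continuousLinearMap p₀).aemeasurable).aestronglyMeasurable
    (ae_of_all _ fun z => ?_)
  rw [norm_div, Real.norm_eq_abs, Real.norm_of_nonneg (hδ.le.trans (hp₀ z))]
  gcongr
  exact hp₀ z

theorem hasFDerivAt_integral_div_clm (ha : Integrable a μ) (hℓ : AEStronglyMeasurable ℓ μ)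
    (hC : ∀ z, ‖ℓ z‖ ≤ C) (hδ : 0 < δ) (hp₀ : ∀ z, δ ≤ ℓ z p₀) :
    HasFDerivAt (fun p => ∫ z, a z / ℓ z p ∂μ) (∫ z, -(a z / ℓ z p₀ ^ 2) • ℓ z ∂μ) p₀ := by
  have hnear : {p : E | C * ‖p - p₀‖ < δ / 2} ∈ 𝓝 p₀ :=
    (isOpen_lt (by fun_prop) continuous_const).mem_nhds (by simpa using hδ)
  have hlower : ∀ z, ∀ p ∈ {p : E | C * ‖p - p₀‖ < δ / 2}, δ / 2 ≤ ℓ z p := fun z p hp => by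
    have hdiff : |ℓ z p - ℓ z p₀| ≤ C * ‖p - p₀‖ := by
      rw [← map_sub]
      exact (ℓ z).le_of_opNorm_le (hC z) _
    have hlt : C * ‖p - p₀‖ < δ / 2 := hp
    linarith [neg_abs_le (ℓ z p - ℓ z p₀), hp₀ z]
  exact hasFDerivAt_integral_of_dominated_of_fderiv_le (F := fun p z => a z / ℓ z p)
    (F' := fun p z => -(a z / ℓ z p ^ 2) • ℓ z) hnear
    (.of_forall fun p =>
      (ha.1.aemeasurable.div (hℓ.apply_continuousLinearMap p).aemeasurable).aestronglyMeasurable)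
    (integrable_div_clm ha hℓ hδ hp₀) (aestronglyMeasurable_smul_div_sq ha.1 hℓ p₀)
    (ae_of_all _ fun z p hp => norm_smul_div_sq_le (half_pos hδ) (hlower z p hp) (hC z))
    (ha.abs.mul_const (C / (δ / 2) ^ 2))
    (ae_of_all _ fun z p hp =>
      hasFDerivAt_div_clm ((half_pos hδ).trans_le (hlower z p hp)).ne')

theorem tendsto_integral_mul_div_mul_add {f k : Z → ℝ} {c : ℝ} (hf : Integrable f μ)
    (hk : AEMeasurable k μ) (hk₀ : ∀ z, 0 ≤ k z) (hk_pos : ∀ᵐ z ∂μ, 0 < k z) (hc : 0 < c) :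
    Tendsto (fun r => ∫ z, f z * (r * k z / (r * k z + c)) ∂μ) atTop (𝓝 (∫ z, f z ∂μ)) := by
  refine tendsto_integral_filter_of_dominated_convergence (fun z => |f z|) ?_ ?_ hf.abs ?_
  · exact .of_forall fun r => (hf.1.aemeasurable.mul ((hk.const_mul r).div
      ((hk.const_mul r).add_const c))).aestronglyMeasurable
  · filter_upwards [eventually_ge_atTop 0] with r hr
    refine ae_of_all _ fun z => ?_
    have hrk := mul_nonneg hr (hk₀ z)
    rw [norm_mul, Real.norm_of_nonneg (div_nonneg hrk (by positivity))]
    exact mul_le_of_le_one_right (norm_nonneg _) (div_le_one_of_le₀ (by linarith) (by positivity))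
  · filter_upwards [hk_pos] with z hz
    have hlim : Tendsto (fun s : ℝ => s / (s + c)) atTop (𝓝 1) := by
      have hinv : Tendsto (fun s => 1 - c / (s + c)) atTop (𝓝 (1 - 0)) :=
        (tendsto_const_nhds.div_atTop (tendsto_atTop_add_const_right _ c tendsto_id)).const_sub 1
      rw [sub_zero] at hinv
      refine hinv.congr' ((eventually_gt_atTop 0).mono fun s hs => ?_)
      have : s + c ≠ 0 := by positivity
      field
    simpa using (hlim.comp (tendsto_id.atTop_mul_const hz)).const_mul (f z)

end ParametricIntegrals

section SphereMeasure

open scoped Pointwise in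
theorem toSphere_singleton {E : Type*} [NormedAddCommGroup E] [NormedSpace ℝ E] [MeasurableSpace E]
    [BorelSpace E] [FiniteDimensional ℝ E] (μ : Measure E) [μ.IsAddHaarMeasure]
    (hE : 1 < Module.finrank ℝ E) (ω : Metric.sphere (0 : E) 1) : μ.toSphere {ω} = 0 := by
  have hcone : Set.Ioo (0 : ℝ) 1 • (Subtype.val '' {ω}) ⊆ (ℝ ∙ (ω : E) : Set E) := by
    rintro _ ⟨a, -, _, ⟨_, rfl, rfl⟩, rfl⟩
    exact Submodule.smul_mem _ a (Submodule.mem_span_singleton_self _)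
  have hline : ℝ ∙ (ω : E) ≠ ⊤ := fun htop => by
    have hrank := finrank_span_le_card (R := ℝ) {(ω : E)}
    rw [htop, finrank_top, Set.toFinset_singleton, Finset.card_singleton] at hrank
    exact hE.not_ge hrank
  rw [Measure.toSphere_apply' _ (measurableSet_singleton ω),
    measure_mono_null hcone (Measure.addHaar_submodule _ _ hline), mul_zero]

instance : IsFiniteMeasure sphM := inferInstanceAs (IsFiniteMeasure (Measure.toSphere _))

/-- The measure `dq dS(σ)` on the cylinder `ℝ × S²` where radiation fields live. -/
def cylM : Measure (ℝ × Metric.sphere (0 : Pt) 1) := (volume : Measure ℝ).prod sphM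

theorem ae_cylM_snd_ne (ω : Metric.sphere (0 : Pt) 1) : ∀ᵐ z ∂cylM, z.2 ≠ ω := by
  have hω : ∀ᵐ σ ∂sphM, σ ≠ ω := by
    rw [ae_iff]
    simpa [sphM] using toSphere_singleton volume (by simp) ω
  exact Measure.quasiMeasurePreserving_snd.ae hω

end SphereMeasure

section RetardedPotential

/-- The linear form `(t, x) ↦ t - ⟨x, σ⟩`, the denominator of the retarded integral. -/
def retardation (σ : Pt) : ℝ × Pt →L[ℝ] ℝ := .fst ℝ ℝ Pt - innerSL ℝ σ ∘L .snd ℝ ℝ Pt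

theorem retardation_apply (σ : Pt) (p : ℝ × Pt) : retardation σ p = p.1 - ⟪p.2, σ⟫ := by
  rw [real_inner_comm]
  rfl

theorem continuous_retardation : Continuous retardation :=
  continuous_const.sub ((innerSL ℝ).continuous.clm_comp continuous_const)

theorem sub_norm_le_retardation {σ : Pt} (hσ : ‖σ‖ = 1) (p : ℝ × Pt) :
    p.1 - ‖p.2‖ ≤ retardation σ p := by
  have hinner := real_inner_le_norm p.2 σ
  rw [hσ, mul_one] at hinner
  rw [retardation_apply]
  linarith

theorem norm_retardation_le {σ : Pt} (hσ : ‖σ‖ = 1) : ‖retardation σ‖ ≤ 2 :=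
  ContinuousLinearMap.opNorm_le_bound _ zero_le_two fun p => by
    have hinner := norm_inner_le_norm (𝕜 := ℝ) p.2 σ
    rw [hσ, mul_one] at hinner
    rw [retardation_apply]
    linarith [norm_sub_le p.1 ⟪p.2, σ⟫, norm_fst_le p, norm_snd_le p]

theorem continuous_Llow (α : Ix) : Continuous (Llow α) := by
  cases α with
  | none => exact continuous_const
  | some i => exact (EuclideanSpace.proj (𝕜 := ℝ) i).continuous

theorem abs_Llow_le_one (α : Ix) {ω : Pt} (hω : ‖ω‖ = 1) : |Llow α ω| ≤ 1 := by
  cases α with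
  | none => simp [Llow]
  | some i => exact hω ▸ PiLp.norm_apply_le ω i

variable {C : ℝ} {j : ℝ → Pt → ℝ}

theorem DecayingCurrent.integrable_cylM (hj : DecayingCurrent C j) :
    Integrable (fun z => j z.1 z.2) cylM := by
  have hbound : Integrable (fun z => C * (1 + z.1 ^ 2)⁻¹ * 1) cylM :=
    (integrable_inv_one_add_sq.const_mul C).mul_prod (integrable_const 1)
  have hcont : Continuous fun z : ℝ × Metric.sphere (0 : Pt) 1 => j z.1 z.2 :=
    hj.continuous.comp (by fun_prop : Continuous
      fun z : ℝ × Metric.sphere (0 : Pt) 1 => (z.1, (z.2 : Pt)))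
  refine hbound.mono' hcont.aestronglyMeasurable (ae_of_all _ fun z => ?_)
  rw [mul_one]
  exact hj.norm_le z.1 (norm_eq_of_mem_sphere z.2)

theorem DecayingCurrent.integrable_Llow_mul (hj : DecayingCurrent C j) (α : Ix) :
    Integrable (fun z => Llow α z.2 * j z.1 z.2) cylM :=
  hj.integrable_cylM.bdd_mul
    ((continuous_Llow α).comp (by fun_prop)).aestronglyMeasurable
    (ae_of_all _ fun z => abs_Llow_le_one α (norm_eq_of_mem_sphere z.2))

/-- The field `∫∫ L_α(σ) j(η, σ) / (t - ⟨x, σ⟩) dS(σ) dη` generated inside the light cone by the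
null current `L_α j`. -/
def retardedIntegral (j : ℝ → Pt → ℝ) (α : Ix) (t : ℝ) (x : Pt) : ℝ :=
  ∫ η : ℝ, ∫ σ : Metric.sphere (0 : Pt) 1, Llow α σ * j η σ / (t - ⟪x, (σ : Pt)⟫) ∂sphM

variable {p : ℝ × Pt}

theorem aestronglyMeasurable_retardation :
    AEStronglyMeasurable (fun z : ℝ × Metric.sphere (0 : Pt) 1 => retardation z.2) cylM :=
  (continuous_retardation.comp (by fun_prop)).aestronglyMeasurable

theorem integrable_retardedIntegrand (hj : DecayingCurrent C j) (α : Ix) (hp : ‖p.2‖ < p.1) :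
    Integrable (fun z => Llow α z.2 * j z.1 z.2 / retardation z.2 p) cylM :=
  integrable_div_clm (hj.integrable_Llow_mul α) aestronglyMeasurable_retardation (sub_pos.mpr hp)
    fun z => sub_norm_le_retardation (norm_eq_of_mem_sphere z.2) p

theorem retardedIntegral_eq_integral_cylM (hj : DecayingCurrent C j) (α : Ix)
    (hp : ‖p.2‖ < p.1) :
    retardedIntegral j α p.1 p.2 = ∫ z, Llow α z.2 * j z.1 z.2 / retardation z.2 p ∂cylM := by
  rw [cylM, integral_prod _ (integrable_retardedIntegrand hj α hp)]
  simp only [retardation_apply, retardedIntegral]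

theorem hasFDerivAt_retardedIntegral (hj : DecayingCurrent C j) (α : Ix) (hp : ‖p.2‖ < p.1) :
    HasFDerivAt (Function.uncurry (retardedIntegral j α))
      (∫ z, -(Llow α z.2 * j z.1 z.2 / retardation z.2 p ^ 2) • retardation z.2 ∂cylM) p := by
  have hint := hasFDerivAt_integral_div_clm (hj.integrable_Llow_mul α)
    aestronglyMeasurable_retardation (fun z => norm_retardation_le (norm_eq_of_mem_sphere z.2))
    (sub_pos.mpr hp) fun z => sub_norm_le_retardation (norm_eq_of_mem_sphere z.2) p
  refine hint.congr_of_eventuallyEq ?_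
  filter_upwards [(isOpen_lt (by fun_prop) (by fun_prop) :
    IsOpen {p : ℝ × Pt | ‖p.2‖ < p.1}).mem_nhds hp] with p' hp'
  exact retardedIntegral_eq_integral_cylM hj α hp'

theorem sum_Llow_mul_retardation {σ : Pt} (hσ : ‖σ‖ = 1) :
    -(Llow none σ * retardation σ (1, 0))
      + ∑ i, Llow (some i) σ * retardation σ (0, EuclideanSpace.single i 1) = 0 := by
  simp [retardation_apply, Llow, EuclideanSpace.inner_single_left, ← sq, sum_coord_sq_of_unit hσ]

theorem divA_retardedIntegral (hj : DecayingCurrent C j) (hp : ‖p.2‖ < p.1) :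
    divA (retardedIntegral j) p.1 p.2 = 0 := by
  have hint (α : Ix) := integrable_smul_div_sq (hj.integrable_Llow_mul α)
    aestronglyMeasurable_retardation (fun z => norm_retardation_le (norm_eq_of_mem_sphere z.2))
    (sub_pos.mpr hp) fun z => sub_norm_le_retardation (norm_eq_of_mem_sphere z.2) p
  rw [divA_eq_of_hasFDerivAt fun α => hasFDerivAt_retardedIntegral hj α hp]
  simp only [ContinuousLinearMap.integral_apply (hint _)]
  rw [← integral_finsetSum _ fun i _ => (hint _).apply_continuousLinearMap _, ← integral_neg,
    ← integral_add ((hint _).apply_continuousLinearMap _).fun_neg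
      (integrable_finsetSum _ fun i _ => (hint _).apply_continuousLinearMap _)]
  refine integral_eq_zero_of_ae (ae_of_all _ fun z => ?_)
  have hnull := sum_Llow_mul_retardation (norm_eq_of_mem_sphere z.2)
  simp only [smul_apply, smul_eq_mul, Pi.zero_apply, Fin.sum_univ_three] at hnull ⊢
  linear_combination -(j z.1 z.2 / retardation z.2 p ^ 2) * hnull

variable {q r : ℝ} {ω : Pt}

theorem norm_lt_of_ray (hr : 0 < r) (hω : ‖ω‖ = 1) (hq : q < 0) : ‖r • ω‖ < r - q := by
  rw [norm_smul_of_unit hr hω]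
  linarith

theorem sum_Lup_mul_Llow (ω σ : Pt) :
    Llow none σ + ∑ i, ω i * Llow (some i) σ = -(1 - ⟪ω, σ⟫) := by
  simp [Llow, PiLp.inner_apply, mul_comm, neg_add_eq_sub]

theorem mul_sum_retardedIntegral_ray (hj : DecayingCurrent C j) (hr : 0 < r) (hω : ‖ω‖ = 1)
    (hq : q < 0) :
    r * (retardedIntegral j none (r - q) (r • ω)
        + ∑ i, ω i * retardedIntegral j (some i) (r - q) (r • ω)) =
      ∫ z, -j z.1 z.2 * (r * (1 - ⟪ω, (z.2 : Pt)⟫) / (r * (1 - ⟪ω, (z.2 : Pt)⟫) + -q)) ∂cylM := by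
  have hp : ‖r • ω‖ < r - q := norm_lt_of_ray hr hω hq
  have hint (α : Ix) := integrable_retardedIntegrand (p := (r - q, r • ω)) hj α hp
  have heq (α : Ix) := retardedIntegral_eq_integral_cylM (p := (r - q, r • ω)) hj α hp
  simp only at heq
  simp only [heq, ← integral_const_mul]
  rw [← integral_finsetSum _ fun i _ => (hint _).const_mul _,
    ← integral_add (hint _) (integrable_finsetSum _ fun i _ => (hint _).const_mul _),
    ← integral_const_mul]
  refine integral_congr_ae (ae_of_all _ fun z => ?_)
  have hdenom : retardation z.2 (r - q, r • ω) = r * (1 - ⟪ω, (z.2 : Pt)⟫) + -q := by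
    rw [retardation_apply, real_inner_smul_left]
    ring
  have hnum := sum_Lup_mul_Llow ω z.2
  simp only [hdenom, Fin.sum_univ_three] at hnum ⊢
  linear_combination (r * j z.1 z.2 / (r * (1 - ⟪ω, (z.2 : Pt)⟫) + -q)) * hnum

theorem tendsto_mul_sum_retardedIntegral (hj : DecayingCurrent C j) (hω : ‖ω‖ = 1) (hq : q < 0) :
    Tendsto (fun r => r * (retardedIntegral j none (r - q) (r • ω)
        + ∑ i, ω i * retardedIntegral j (some i) (r - q) (r • ω))) atTop
      (𝓝 (-∫ z, j z.1 z.2 ∂cylM)) := by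
  have hle (σ : Metric.sphere (0 : Pt) 1) : ⟪ω, (σ : Pt)⟫ ≤ 1 := by
    simpa [hω] using real_inner_le_norm ω (σ : Pt)
  have hlt : ∀ᵐ z ∂cylM, 0 < 1 - ⟪ω, (z.2 : Pt)⟫ := by
    filter_upwards [ae_cylM_snd_ne ⟨ω, by simpa using hω⟩] with z hz
    refine sub_pos.mpr <|
      (inner_lt_one_iff_real_of_norm_eq_one hω (norm_eq_of_mem_sphere z.2)).mpr ?_
    exact fun h => hz (Subtype.ext h.symm)
  rw [← integral_neg]
  refine (tendsto_integral_mul_div_mul_add hj.integrable_cylM.neg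
    (by fun_prop : Continuous fun z : ℝ × Metric.sphere (0 : Pt) 1 =>
      1 - ⟪ω, (z.2 : Pt)⟫).aemeasurable (fun z => sub_nonneg.mpr (hle z.2)) hlt
    (neg_pos.mpr hq)).congr' ?_
  filter_upwards [eventually_gt_atTop 0] with r hr
  exact (mul_sum_retardedIntegral_ray hj hr hω hq).symm

end RetardedPotential

section InteriorPart

variable {C q r : ℝ} {χ : ℝ → ℝ} {j : ℝ → Pt → ℝ} {ω : Pt}

theorem hasFDerivAt_comp_sub_ray {χ' : ℝ} (hr : 0 < r) (hω : ‖ω‖ = 1) (hχ : HasDerivAt χ χ' q) :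
    HasFDerivAt (fun p : ℝ × Pt => χ (‖p.2‖ - p.1))
      (χ' • (innerSL ℝ ω ∘L .snd ℝ ℝ Pt - .fst ℝ ℝ Pt)) (r - q, r • ω) := by
  have hq : ‖r • ω‖ - (r - q) = q := by rw [norm_smul_of_unit hr hω, sub_sub_cancel]
  have hfst := (hasFDerivAt_nullCoord_ray (q := q) hr hω).fst
  exact HasDerivAt.comp_hasFDerivAt (h₂ := χ) (r - q, r • ω) (by simpa [nullCoord, hq]) hfst

theorem divA_mul_comp_sub_ray {A : Ix → ℝ → Pt → ℝ} (hr : 0 < r) (hω : ‖ω‖ = 1)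
    (hA : ∀ α, DifferentiableAt ℝ (Function.uncurry (A α)) (r - q, r • ω))
    (hχ : DifferentiableAt ℝ χ q) :
    divA (fun α t x => A α t x * χ (‖x‖ - t)) (r - q) (r • ω) =
      χ q * divA A (r - q) (r • ω)
        + deriv χ q * (A none (r - q) (r • ω) + ∑ i, ω i * A (some i) (r - q) (r • ω)) := by
  have hq : ‖r • ω‖ - (r - q) = q := by rw [norm_smul_of_unit hr hω, sub_sub_cancel]
  have hmul (α : Ix) := (hA α).hasFDerivAt.mul (hasFDerivAt_comp_sub_ray hr hω hχ.hasDerivAt)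
  rw [divA_eq_of_hasFDerivAt (A := fun α t x => A α t x * χ (‖x‖ - t)) hmul,
    divA_eq_of_hasFDerivAt fun α => (hA α).hasFDerivAt]
  simp [hq, Fin.sum_univ_three, EuclideanSpace.inner_single_right]
  ring

/-- The part `(1/4π) χ(r - t) ∫∫ L_α j / (t - ⟨x, σ⟩)` of the asymptotic gauge potential that
lives in the interior of the light cone. -/
def interiorPotential (χ : ℝ → ℝ) (j : ℝ → Pt → ℝ) (α : Ix) (t : ℝ) (x : Pt) : ℝ :=
  retardedIntegral j α t x * (χ (‖x‖ - t) / (4 * π))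

theorem interiorPotential_eventuallyEq_zero (α : Ix) (hr : 0 < r) (hω : ‖ω‖ = 1)
    (hχ : χ =ᶠ[𝓝 q] 0) :
    Function.uncurry (interiorPotential χ j α) =ᶠ[𝓝 (r - q, r • ω)] 0 := by
  have hcont : Tendsto (fun p : ℝ × Pt => ‖p.2‖ - p.1) (𝓝 (r - q, r • ω)) (𝓝 q) := by
    have : ContinuousAt (fun p : ℝ × Pt => ‖p.2‖ - p.1) (r - q, r • ω) := by fun_prop
    simpa [ContinuousAt, norm_smul_of_unit hr hω] using this
  filter_upwards [hcont.eventually hχ] with p hp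
  simp [Function.uncurry, interiorPotential, hp]

theorem differentiableAt_interiorPotential (hj : DecayingCurrent C j) (α : Ix) (hr : 0 < r)
    (hω : ‖ω‖ = 1) (hχ : DifferentiableAt ℝ χ q) (hχ₀ : 0 ≤ q → χ =ᶠ[𝓝 q] 0) :
    DifferentiableAt ℝ (Function.uncurry (interiorPotential χ j α)) (r - q, r • ω) := by
  rcases lt_or_ge q 0 with hq | hq
  · have hp : ‖((r - q, r • ω) : ℝ × Pt).2‖ < ((r - q, r • ω) : ℝ × Pt).1 :=
      norm_lt_of_ray hr hω hq
    have hcut := hasFDerivAt_comp_sub_ray hr hω (hχ.div_const (4 * π)).hasDerivAt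
    exact (hasFDerivAt_retardedIntegral hj α hp).differentiableAt.mul hcut.differentiableAt
  · exact (differentiableAt_const 0).congr_of_eventuallyEq
      (interiorPotential_eventuallyEq_zero α hr hω (hχ₀ hq))

theorem mul_divA_interiorPotential_ray (hj : DecayingCurrent C j) (hr : 0 < r) (hω : ‖ω‖ = 1)
    (hq : q < 0) (hχ : DifferentiableAt ℝ χ q) :
    r * divA (interiorPotential χ j) (r - q) (r • ω) =
      deriv χ q / (4 * π) * (r * (retardedIntegral j none (r - q) (r • ω)
        + ∑ i, ω i * retardedIntegral j (some i) (r - q) (r • ω))) := by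
  have hp : ‖((r - q, r • ω) : ℝ × Pt).2‖ < ((r - q, r • ω) : ℝ × Pt).1 :=
    norm_lt_of_ray hr hω hq
  have hA (α : Ix) :
      DifferentiableAt ℝ (Function.uncurry (retardedIntegral j α)) (r - q, r • ω) :=
    (hasFDerivAt_retardedIntegral hj α hp).differentiableAt
  have hdiv : divA (interiorPotential χ j) (r - q) (r • ω) = _ :=
    divA_mul_comp_sub_ray (χ := fun s => χ s / (4 * π)) hr hω hA (hχ.div_const _)
  rw [hdiv, divA_retardedIntegral (p := (r - q, r • ω)) hj hp, mul_zero, zero_add,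
    deriv_div_const, mul_left_comm]

theorem tendsto_mul_divA_interiorPotential (hj : DecayingCurrent C j) (hω : ‖ω‖ = 1)
    (hχ : DifferentiableAt ℝ χ q) (hχ₀ : 0 ≤ q → χ =ᶠ[𝓝 q] 0) :
    Tendsto (fun r => r * divA (interiorPotential χ j) (r - q) (r • ω)) atTop
      (𝓝 (deriv χ q / (4 * π) * -∫ z, j z.1 z.2 ∂cylM)) := by
  rcases lt_or_ge q 0 with hq | hq
  · refine ((tendsto_mul_sum_retardedIntegral hj hω hq).const_mul _).congr' ?_
    filter_upwards [eventually_gt_atTop 0] with r hr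
    exact (mul_divA_interiorPotential_ray hj hr hω hq hχ).symm
  · have hderiv : deriv χ q = 0 := (hχ₀ hq).deriv_eq.trans (deriv_const q 0)
    rw [hderiv, zero_div, zero_mul]
    refine tendsto_const_nhds.congr' ?_
    filter_upwards [eventually_gt_atTop 0] with r hr
    rw [divA_eq_of_hasFDerivAt (A' := 0) fun α => (hasFDerivAt_const 0 _).congr_of_eventuallyEq
      (interiorPotential_eventuallyEq_zero α hr hω (hχ₀ hq))]
    simp

end InteriorPart

section AsymptoticPotential

variable {γ M q : ℝ} {χin χex : ℝ → ℝ} {Φ : ℝ → Pt → ℂ} {𝒜 : Ix → ℝ → Pt → ℝ} {ω : Pt}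

theorem Jr_eq_Llow_mul (Φ : ℝ → Pt → ℂ) (α : Ix) (q : ℝ) (σ : Pt) :
    Jr Φ α q σ = Llow α σ * nullCurrent Φ q σ :=
  rfl

theorem charge_eq_neg_integral_nullCurrent {C : ℝ} (hj : DecayingCurrent C (nullCurrent Φ)) :
    charge Φ = -∫ z, nullCurrent Φ z.1 z.2 ∂cylM := by
  rw [cylM, integral_prod _ hj.integrable_cylM]
  simp only [charge, Jr_eq_Llow_mul, Llow, neg_one_mul, integral_neg]

/-- The radiation fields of `A_{α,asy}`: `𝒜_α` together with the exterior Coulomb term. -/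
def coulombCorrected (χex : ℝ → ℝ) (Φ : ℝ → Pt → ℂ) (𝒜 : Ix → ℝ → Pt → ℝ) (α : Ix) (q : ℝ)
    (ω : Pt) : ℝ :=
  𝒜 α q ω + charge Φ / (4 * π) * χex q * (if α = none then 1 else 0)

theorem Aasy_eq_add (χin χex : ℝ → ℝ) (Φ : ℝ → Pt → ℂ) (𝒜 : Ix → ℝ → Pt → ℝ) :
    Aasy χin χex Φ 𝒜 = interiorPotential χin (nullCurrent Φ) + logPotential χin (nullCurrent Φ)
      + radiationPotential (coulombCorrected χex Φ 𝒜) := by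
  funext α t x
  simp only [Aasy, rad, Jr_eq_Llow_mul, integral_const_mul, Pi.add_apply, interiorPotential,
    retardedIntegral, logPotential, logProfile, logCoeff, radiationPotential, coulombCorrected,
    NormedSpace.normalize]
  ring

theorem differentiableAt_coulombCorrected {α : Ix}
    (h𝒜 : DifferentiableAt ℝ (Function.uncurry (𝒜 α)) (q, ω)) (hχ : DifferentiableAt ℝ χex q) :
    DifferentiableAt ℝ (Function.uncurry (coulombCorrected χex Φ 𝒜 α)) (q, ω) := by
  have hcutoff : DifferentiableAt ℝ (fun p : ℝ × Pt => χex p.1) (q, ω) :=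
    hχ.comp (f := Prod.fst) (q, ω) differentiableAt_fst
  exact h𝒜.add ((hcutoff.const_mul _).mul_const _)

/-- The quantity `L^α 𝒜_α + (𝐪/4π) χ_in + (𝐪/4π) χ_ex` along the ray in direction `ω`, whose
`q`-derivative is the leading term of the divergence of `A_{α,asy}`. -/
def gaugeProfile (χin χex : ℝ → ℝ) (Φ : ℝ → Pt → ℂ) (𝒜 : Ix → ℝ → Pt → ℝ) (ω : Pt) (s : ℝ) : ℝ :=
  𝒜 none s ω + (∑ i, ω i * 𝒜 (some i) s ω)
    + (charge Φ / (4 * π)) * χin s + (charge Φ / (4 * π)) * χex s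

theorem deriv_gaugeProfile
    (h𝒜 : ∀ α, DifferentiableAt ℝ (Function.uncurry (𝒜 α)) (q, ω))
    (hχin : DifferentiableAt ℝ χin q) (hχex : DifferentiableAt ℝ χex q) :
    deriv (gaugeProfile χin χex Φ 𝒜 ω) q = deriv χin q / (4 * π) * charge Φ
      + deriv (fun s => coulombCorrected χex Φ 𝒜 none s ω
          + ∑ i, ω i * coulombCorrected χex Φ 𝒜 (some i) s ω) q := by
  have hF (α : Ix) := (hasDerivAt_curry_left
    (differentiableAt_coulombCorrected (Φ := Φ) (h𝒜 α) hχex).hasFDerivAt).differentiableAt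
  have hsum := (hF none).fun_add
    (DifferentiableAt.fun_sum (u := Finset.univ) fun i _ => (hF (some i)).const_mul (ω i))
  have hsplit : gaugeProfile χin χex Φ 𝒜 ω = fun s => charge Φ / (4 * π) * χin s
      + (coulombCorrected χex Φ 𝒜 none s ω
          + ∑ i, ω i * coulombCorrected χex Φ 𝒜 (some i) s ω) := by
    funext s
    simp only [gaugeProfile, coulombCorrected, if_true, reduceCtorEq, if_false, mul_zero, add_zero]
    ring
  rw [hsplit, deriv_fun_add (hχin.const_mul _) hsum, deriv_const_mul _ hχin]
  ring

theorem tendsto_mul_divA_Aasy (hγ : 1 / 2 ≤ γ) (hΦ : ContDiff ℝ 2 (Function.uncurry Φ))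
    (hM : RadBound 2 γ M Φ) (hω : ‖ω‖ = 1)
    (h𝒜 : ∀ α, DifferentiableAt ℝ (Function.uncurry (𝒜 α)) (q, ω))
    (hχin : DifferentiableAt ℝ χin q) (hχin₀ : 0 ≤ q → χin =ᶠ[𝓝 q] 0)
    (hχex : DifferentiableAt ℝ χex q) :
    Tendsto (fun r => r * divA (Aasy χin χex Φ 𝒜) (r - q) (r • ω)) atTop
      (𝓝 (deriv (gaugeProfile χin χex Φ 𝒜 ω) q)) := by
  have hj := decayingCurrent_nullCurrent hγ hΦ hM
  have hF (α : Ix) := differentiableAt_coulombCorrected (Φ := Φ) (h𝒜 α) hχex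
  have hlim := ((tendsto_mul_divA_interiorPotential hj hω hχin hχin₀).add
    (tendsto_mul_divA_logPotential hj hω hχin)).add (tendsto_mul_divA_radiationPotential hω hF)
  rw [← charge_eq_neg_integral_nullCurrent hj, add_zero,
    ← deriv_gaugeProfile h𝒜 hχin hχex] at hlim
  refine hlim.congr' ?_
  filter_upwards [eventually_gt_atTop 0] with r hr
  have hint (α : Ix) := differentiableAt_interiorPotential hj α hr hω hχin hχin₀
  have hlog (α : Ix) : DifferentiableAt ℝ
      (Function.uncurry (logPotential χin (nullCurrent Φ) α)) (r - q, r • ω) :=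
    differentiableAt_logPotential hj (smul_unit_ne_zero hr hω)
      (by rwa [norm_smul_of_unit hr hω, sub_sub_cancel]) α
  have hrad (α : Ix) := (hasFDerivAt_radiationPotential hr hω (hF α).hasFDerivAt).differentiableAt
  have hsum (α : Ix) : DifferentiableAt ℝ (Function.uncurry
      ((interiorPotential χin (nullCurrent Φ) + logPotential χin (nullCurrent Φ)) α))
      (r - q, r • ω) := (hint α).add (hlog α)
  rw [Aasy_eq_add, divA_add hsum hrad, divA_add hint hlog]
  ring

theorem isLittleO_inv_of_abs_le_log_div_sq {f : ℝ → ℝ}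
    (hf : ∃ c R : ℝ, ∀ r : ℝ, R ≤ r → |f r| ≤ c * Real.log r / r ^ 2) :
    f =o[atTop] fun r => r⁻¹ := by
  obtain ⟨c, R, hcR⟩ := hf
  have hbound : f =O[atTop] fun r => Real.log r * (r ^ 2)⁻¹ :=
    .of_bound |c| <| (eventually_ge_atTop R).mono fun r hr => (hcR r hr).trans <| by
      rw [mul_div_assoc, ← div_eq_mul_inv, Real.norm_eq_abs, ← abs_mul]
      exact le_abs_self _
  have hlog := Real.isLittleO_log_id_atTop.mul_isBigO
    (Asymptotics.isBigO_refl (fun r : ℝ => (r ^ 2)⁻¹) atTop)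
  refine hbound.trans_isLittleO (hlog.congr_right fun r => ?_)
  simp only [id]
  field

theorem eventuallyEq_zero_of_forall_ge {χ : ℝ → ℝ} {a : ℝ} (hχ : ∀ s, a ≤ s → χ s = 0)
    (hq : a < q) : χ =ᶠ[𝓝 q] 0 :=
  (lt_mem_nhds hq).mono fun s hs => hχ s hs.le

theorem differentiable_of_smooth2_ofReal {f : ℝ → Pt → ℝ}
    (hf : Smooth2 fun q ω => ((f q ω : ℝ) : ℂ)) : Differentiable ℝ (Function.uncurry f) :=
  Complex.reCLM.differentiable.comp (hf.differentiable (by simp))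

theorem stmt13_general (hγ : 1 / 2 ≤ γ) (hΦ : ContDiff ℝ 2 (Function.uncurry Φ))
    (hM : RadBound 2 γ M Φ) (hω : rad ω = 1)
    (h𝒜 : ∀ α, DifferentiableAt ℝ (Function.uncurry (𝒜 α)) (q, ω))
    (hχin : DifferentiableAt ℝ χin q) (hχin₀ : 0 ≤ q → χin =ᶠ[𝓝 q] 0)
    (hχex : DifferentiableAt ℝ χex q)
    (hLorenz : (fun r => divA (Aasy χin χex Φ 𝒜) (r - q) (r • ω)) =o[atTop] fun r => r⁻¹) :
    deriv (fun s => 𝒜 none s ω + (∑ i, ω i * 𝒜 (some i) s ω)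
      + (charge Φ / (4 * π)) * χin s + (charge Φ / (4 * π)) * χex s) q = 0 := by
  have hzero := hLorenz.tendsto_div_nhds_zero
  simp only [div_inv_eq_mul, mul_comm (divA _ _ _)] at hzero
  exact tendsto_nhds_unique (tendsto_mul_divA_Aasy hγ hΦ hM hω h𝒜 hχin hχin₀ hχex) hzero

end AsymptoticPotential

/-- Proposition 3.6, the asymptotic Lorenz gauge condition forces
the ODE `∂_q(L^α𝒜_α + (𝐪/4π)χ_in + (𝐪/4π)χ_ex) = 0`. -/
theorem stmt13 (γ : ℝ) (hγ : 1 / 2 < γ) (hγ1 : γ < 1)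
    (χin χex : ℝ → ℝ)
    (hχin : ContDiff ℝ (⊤ : ℕ∞) χin) (hχin1 : ∀ s : ℝ, s ≤ -1 → χin s = 1)
    (hχin0 : ∀ s : ℝ, -(1 / 2) ≤ s → χin s = 0)
    (hχex : ContDiff ℝ (⊤ : ℕ∞) χex) (hχex1 : ∀ s : ℝ, 1 ≤ s → χex s = 1)
    (hχex0 : ∀ s : ℝ, s ≤ 1 / 2 → χex s = 0)
    (Φ : ℝ → Pt → ℂ) (𝒜 : Ix → ℝ → Pt → ℝ)
    (hΦ : Smooth2 Φ) (h𝒜 : ∀ α, Smooth2 (fun q ω => ((𝒜 α q ω : ℝ) : ℂ)))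
    (hfin : ∃ M : ℝ, RadBound 3 γ M Φ ∧
      ∀ α, RadBound 3 γ M (fun q ω => ((𝒜 α q ω : ℝ) : ℂ)))
    (hLorenz : ∀ (q : ℝ) (ω : Pt), rad ω = 1 →
      ∃ c R : ℝ, ∀ r : ℝ, R ≤ r →
        |divA (Aasy χin χex Φ 𝒜) (r - q) (r • ω)| ≤ c * Real.log r / r ^ 2) :
    ∀ (q : ℝ) (ω : Pt), rad ω = 1 →
      deriv (fun s => 𝒜 none s ω + (∑ i, ω i * 𝒜 (some i) s ω)
        + (charge Φ / (4 * π)) * χin s + (charge Φ / (4 * π)) * χex s) q = 0 := by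
  obtain ⟨M, hM, -⟩ := hfin
  exact fun q ω hω => stmt13_general hγ.le (contDiff_infty.mp hΦ 2) (hM.mono (by norm_num)) hω
    (fun α => differentiable_of_smooth2_ofReal (h𝒜 α) _) (hχin.differentiable (by simp) q)
    (fun hq => eventuallyEq_zero_of_forall_ge hχin0 (by linarith))
    (hχex.differentiable (by simp) q) (isLittleO_inv_of_abs_le_log_div_sq (hLorenz q ω hω))
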